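/- arXiv:1606.07135 — 3 statements merged into one kernel-verified Lean document; each statement's English description precedes it below -/
import Mathlib

section
/- Let k have prime characteristic p > 2, let V = kv_1 ⊕ kv_2 ⊕ kv_3, and let G = ⟨g⟩ ≤ GL(V) be the cyclic group of order p generated by the transvection g fixing v_1 and v_2 and mapping v_3 to v_1 + v_3. Define λ(g^i, v_3) = i g^{i−1} for all i, κ^C(v_1, v_3) = g = −κ^C(v_3, v_1), κ^L(v_1, v_3) = v_2⊗1 = −κ^L(v_3, v_1), and set λ, κ^C, κ^L equal to zero on all other pairs of basis vectors. Then H_{λ,κ} = T_{kG}(kG⊗V⊗kG)/( gv_1 − v_1g, gv_2 − v_2g, gv_3 − v_1g − v_3g − 1, v_1v_3 − v_3v_1 − v_2 − g, v_1v_2 − v_2v_1, v_2v_3 − v_3v_2 ) is a PBW deformation of S(V)⋊G. -/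
open TensorProduct

noncomputable section

namespace DeformKoszul

variable (k G V : Type) [Field k] [Group G] [AddCommGroup V] [Module k V]

/-- The free `k`-algebra on the vector space `kG ⊕ V`. -/
abbrev FreeAlg := TensorAlgebra k (MonoidAlgebra k G × V)

/-- The canonical embedding of the group algebra `kG` into the free algebra. -/
def gIn : MonoidAlgebra k G →ₗ[k] FreeAlg k G V :=
  (TensorAlgebra.ι k).comp (LinearMap.inl k (MonoidAlgebra k G) V)

/-- The canonical embedding of `V` into the free algebra. -/
def vIn : V →ₗ[k] FreeAlg k G V :=
  (TensorAlgebra.ι k).comp (LinearMap.inr k (MonoidAlgebra k G) V)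

/-- `V ⊗ kG → FreeAlg`, `v ⊗ x ↦ v·x`. -/
def embVG : V ⊗[k] MonoidAlgebra k G →ₗ[k] FreeAlg k G V :=
  (LinearMap.mul' k _).comp (TensorProduct.map (vIn k G V) (gIn k G V))

variable (ρ : Representation k G V)

/-- The defining relations of `H_{λ,κ}`: `kG` is a subalgebra (with the same unit),
`g·v = (ᵍv)·g + λ(g,v)`, and `v·w = w·v + κ^L(v,w) + κ^C(v,w)`. -/
inductive PRel (lam : G → V →ₗ[k] MonoidAlgebra k G)
    (κC : V →ₗ[k] V →ₗ[k] MonoidAlgebra k G)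
    (κL : V →ₗ[k] V →ₗ[k] (V ⊗[k] MonoidAlgebra k G)) :
    FreeAlg k G V → FreeAlg k G V → Prop
  | unit : PRel lam κC κL (gIn k G V 1) 1
  | gmul (x y : MonoidAlgebra k G) :
      PRel lam κC κL (gIn k G V x * gIn k G V y) (gIn k G V (x * y))
  | act (g : G) (v : V) :
      PRel lam κC κL (gIn k G V (MonoidAlgebra.of k G g) * vIn k G V v)
        (vIn k G V (ρ g v) * gIn k G V (MonoidAlgebra.of k G g) + gIn k G V (lam g v))
  | comm (v w : V) :
      PRel lam κC κL (vIn k G V v * vIn k G V w)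
        (vIn k G V w * vIn k G V v + embVG k G V (κL v w) + gIn k G V (κC v w))

variable (lam : G → V →ₗ[k] MonoidAlgebra k G)
    (κC : V →ₗ[k] V →ₗ[k] MonoidAlgebra k G)
    (κL : V →ₗ[k] V →ₗ[k] (V ⊗[k] MonoidAlgebra k G))

/-- The algebra `H_{λ,κ}`.  For `lam = 0`, `κC = 0`, `κL = 0` this is (the presentation
of) the skew group algebra `S(V) ⋊ G`. -/
abbrev HP := RingQuot (PRel k G V ρ lam κC κL)

/-- The quotient map onto `H_{λ,κ}`. -/
def toHP : FreeAlg k G V →ₐ[k] HP k G V ρ lam κC κL :=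
  RingQuot.mkAlgHom k (PRel k G V ρ lam κC κL)

/-- Degree-`n` part of the free algebra: `kG` has degree 0 and `V` degree 1. -/
def grT : ℕ → Submodule k (FreeAlg k G V)
  | 0 => Subalgebra.toSubmodule (Algebra.adjoin k (Set.range (gIn k G V)))
  | n+1 => grT n * (LinearMap.range (vIn k G V) * grT 0)

/-- Filtration of the free algebra, `kG` in degree 0 and `V` in degree 1. -/
def filtT : ℕ → Submodule k (FreeAlg k G V)
  | 0 => grT k G V 0
  | n+1 => filtT n ⊔ grT k G V (n+1)

/-- The induced filtration on `H_{λ,κ}`. -/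
def filtP (d : ℕ) : Submodule k (HP k G V ρ lam κC κL) :=
  (filtT k G V d).map (toHP k G V ρ lam κC κL).toLinearMap

/-- `H_{λ,κ}` is a PBW deformation of `S(V) ⋊ G`:  the associated graded algebra is
`S(V) ⋊ G`, equivalently (all filtered pieces being finite dimensional) each filtered
piece has the same dimension as the corresponding one of `S(V) ⋊ G = H_{0,0}`. -/
def IsPBWP : Prop :=
  ∀ d, Module.finrank k (filtP k G V ρ lam κC κL d) = Module.finrank k (filtP k G V ρ 0 0 0 d)

section Example7


variable (k : Type) [Field k] (p : ℕ) [Fact p.Prime] [CharP k p]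

/-- scalar of `x = gⁱ`, namely `i` viewed in `k` (well defined since `char k = p`). -/
def cf (x : Multiplicative (ZMod p)) : k := ZMod.castHom (dvd_refl p) k x.toAdd

lemma cf_mul (x y : Multiplicative (ZMod p)) : cf k p (x * y) = cf k p x + cf k p y := by
  simp [cf, toAdd_mul, map_add]

lemma cf_one : cf k p 1 = 0 := by simp [cf]

/-- the distinguished generator `g` of the cyclic group of order `p`. -/
def gg : Multiplicative (ZMod p) := Multiplicative.ofAdd 1


/-- the nilpotent part of the transvection on `k³`: `f ↦ f(2)·e₀`. -/
def E3 : (Fin 3 → k) →ₗ[k] (Fin 3 → k) :=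
  (LinearMap.single k (fun _ => k) 0).comp (LinearMap.proj 2)

lemma E3sq : (E3 k) * (E3 k) = 0 := by
  ext f i
  simp [E3, Module.End.mul_apply, Pi.single_apply]

/-- the representation of `G = ⟨g⟩ ≅ ℤ/p` on `V = k³` in which the generator `g` fixes
`v₁ = e₀` and `v₂ = e₁` and sends `v₃ = e₂` to `v₁ + v₃` (a transvection). -/
def ρ3 : Representation k (Multiplicative (ZMod p)) (Fin 3 → k) where
  toFun x := 1 + cf k p x • E3 k
  map_one' := by simp [cf_one]
  map_mul' x y := by
    show 1 + cf k p (x * y) • E3 k = (1 + cf k p x • E3 k) * (1 + cf k p y • E3 k)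
    rw [cf_mul, add_smul, mul_add, add_mul, add_mul, mul_one, one_mul, smul_mul_smul_comm,
      E3sq, smul_zero]
    simp only [mul_one]
    abel

/-- `λ(gⁱ, v₃) = i·g^{i-1}` and `λ(gⁱ, v₁) = λ(gⁱ, v₂) = 0`. -/
def lam7 : Multiplicative (ZMod p) → (Fin 3 → k) →ₗ[k] MonoidAlgebra k (Multiplicative (ZMod p)) :=
  fun x => (LinearMap.proj 2 : ((Fin 3 → k)) →ₗ[k] k).smulRight
    (cf k p x • MonoidAlgebra.single (x * (gg p)⁻¹) (1 : k))

/-- the alternating bilinear form `(u,v) ↦ u₀v₂ − u₂v₀` (so `B(v₁,v₃) = 1`). -/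
def B3det : (Fin 3 → k) →ₗ[k] (Fin 3 → k) →ₗ[k] k :=
  (LinearMap.mul k k).compl₁₂ (LinearMap.proj 0) (LinearMap.proj 2)
    - (LinearMap.mul k k).compl₁₂ (LinearMap.proj 2) (LinearMap.proj 0)

/-- `κ^C(v₁,v₃) = g = −κ^C(v₃,v₁)`, zero on all other pairs of basis vectors. -/
def κC7 : (Fin 3 → k) →ₗ[k] (Fin 3 → k) →ₗ[k] MonoidAlgebra k (Multiplicative (ZMod p)) :=
  (B3det k).compr₂
    (LinearMap.toSpanSingleton k (MonoidAlgebra k (Multiplicative (ZMod p)))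
      (MonoidAlgebra.single (gg p) 1))

/-- `κ^L(v₁,v₃) = v₂ ⊗ 1 = −κ^L(v₃,v₁)`, zero on all other pairs of basis vectors. -/
def κL7 : (Fin 3 → k) →ₗ[k] (Fin 3 → k) →ₗ[k]
    ((Fin 3 → k) ⊗[k] MonoidAlgebra k (Multiplicative (ZMod p))) :=
  (B3det k).compr₂
    (LinearMap.toSpanSingleton k ((Fin 3 → k) ⊗[k] MonoidAlgebra k (Multiplicative (ZMod p)))
      ((Pi.single (1 : Fin 3) (1 : k)) ⊗ₜ[k] (1 : MonoidAlgebra k (Multiplicative (ZMod p)))))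

end Example7

end DeformKoszul

open DeformKoszul


namespace TransvPBW

set_option linter.unusedSectionVars false

variable (k : Type) [Field k] (p : ℕ) [Fact p.Prime] [CharP k p] (α β γ : k)

abbrev GP (p : ℕ) := Multiplicative (ZMod p)
abbrev BB (k : Type) [Field k] (p : ℕ) := (ℕ × ℕ × ℕ × GP p) →₀ k

def ee (a b c : ℕ) (y : GP p) : BB k p := Finsupp.single (a, b, c, y) 1

/-- linear map given on basis -/
def mk {M : Type} [AddCommGroup M] [Module k M] (f : ℕ → ℕ → ℕ → GP p → M) : BB k p →ₗ[k] M :=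
  Finsupp.linearCombination k (fun i => f i.1 i.2.1 i.2.2.1 i.2.2.2)

@[simp] lemma mk_ee {M : Type} [AddCommGroup M] [Module k M] (f : ℕ → ℕ → ℕ → GP p → M)
    (a b c : ℕ) (y : GP p) : mk k p f (ee k p a b c y) = f a b c y := by
  simp [mk, ee]

lemma hom_ext {M : Type} [AddCommGroup M] [Module k M] {f g : BB k p →ₗ[k] M}
    (h : ∀ a b c y, f (ee k p a b c y) = g (ee k p a b c y)) : f = g := by
  ext ⟨a, b, c, y⟩
  simpa [ee] using h a b c y

def W1 : Module.End k (BB k p) := mk k p (fun a b c y => ee k p (a+1) b c y)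
def W2 : Module.End k (BB k p) := mk k p (fun a b c y => ee k p a (b+1) c y)
def WG : GP p →* Module.End k (BB k p) where
  toFun x := mk k p (fun a b c y => ee k p a b c (x * y))
  map_one' := hom_ext k p (by simp)
  map_mul' x y := hom_ext k p (by simp [mul_assoc])
def W3 : Module.End k (BB k p) := mk k p (fun a b c y => ee k p a b (c+1) y
  - (a : k) • (β • ee k p (a-1) (b+1) c y + γ • ee k p (a-1) b c (gg p * y))
  - cf k p y • (ee k p (a+1) b c y + α • ee k p a b c (y * (gg p)⁻¹)))

@[simp] lemma W1_ee (a b c : ℕ) (y : GP p) : W1 k p (ee k p a b c y) = ee k p (a+1) b c y := by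
  simp [W1]
@[simp] lemma W2_ee (a b c : ℕ) (y : GP p) : W2 k p (ee k p a b c y) = ee k p a (b+1) c y := by
  simp [W2]
@[simp] lemma WG_ee (x : GP p) (a b c : ℕ) (y : GP p) :
    WG k p x (ee k p a b c y) = ee k p a b c (x * y) := by
  simp [WG]
lemma W3_ee (a b c : ℕ) (y : GP p) : W3 k p α β γ (ee k p a b c y) = ee k p a b (c+1) y
  - (a : k) • (β • ee k p (a-1) (b+1) c y + γ • ee k p (a-1) b c (gg p * y))
  - cf k p y • (ee k p (a+1) b c y + α • ee k p a b c (y * (gg p)⁻¹)) := by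
  simp [W3]

lemma W12 : W1 k p * W2 k p = W2 k p * W1 k p := hom_ext k p (by simp)
lemma WG1 (x : GP p) : WG k p x * W1 k p = W1 k p * WG k p x := hom_ext k p (by simp)
lemma WG2 (x : GP p) : WG k p x * W2 k p = W2 k p * WG k p x := hom_ext k p (by simp)
lemma W23 : W2 k p * W3 k p α β γ = W3 k p α β γ * W2 k p := hom_ext k p (by simp [W3_ee])
lemma W13 : W1 k p * W3 k p α β γ = W3 k p α β γ * W1 k p + (β • W2 k p + γ • WG k p (gg p)) :=
  hom_ext k p (by
    intro a b c y
    cases a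
    · simp [W3_ee]
      module
    · simp [W3_ee]
      module)
lemma WG3 (x : GP p) : WG k p x * W3 k p α β γ = W3 k p α β γ * WG k p x +
    cf k p x • (W1 k p * WG k p x + α • WG k p (x * (gg p)⁻¹)) :=
  hom_ext k p (by
    intro a b c y
    have h1 : x * (gg p * y) = gg p * (x * y) := mul_left_comm _ _ _
    have h2 : x * (gg p)⁻¹ * y = x * (y * (gg p)⁻¹) := by rw [mul_assoc, mul_comm y]
    simp only [Module.End.mul_apply, LinearMap.add_apply, LinearMap.smul_apply, W3_ee, WG_ee, W1_ee,
      map_add, map_sub, map_smul, cf_mul, h1, h2, mul_assoc]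
    module)

abbrev Vk (k : Type) := Fin 3 → k

def vAct : Vk k →ₗ[k] Module.End k (BB k p) :=
  (LinearMap.proj 0 : Vk k →ₗ[k] k).smulRight (W1 k p) +
  (LinearMap.proj 1 : Vk k →ₗ[k] k).smulRight (W2 k p) +
  (LinearMap.proj 2 : Vk k →ₗ[k] k).smulRight (W3 k p α β γ)

def gAct : MonoidAlgebra k (GP p) →ₐ[k] Module.End k (BB k p) := MonoidAlgebra.lift k _ _ (WG k p)

def freeAct : FreeAlg k (GP p) (Vk k) →ₐ[k] Module.End k (BB k p) :=
  TensorAlgebra.lift k (LinearMap.coprod (gAct k p).toLinearMap (vAct k p α β γ))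

@[simp] lemma freeAct_g (x) : freeAct k p α β γ (gIn k _ _ x) = gAct k p x := by
  simp [freeAct, gIn]
@[simp] lemma freeAct_v (x) : freeAct k p α β γ (vIn k _ _ x) = vAct k p α β γ x := by
  simp [freeAct, vIn]

abbrev PR := PRel k (GP p) (Vk k) (ρ3 k p) (α • lam7 k p) (γ • κC7 k p) (β • κL7 k p)
abbrev HH := HP k (GP p) (Vk k) (ρ3 k p) (α • lam7 k p) (γ • κC7 k p) (β • κL7 k p)
abbrev toH : FreeAlg k (GP p) (Vk k) →ₐ[k] HH k p α β γ :=
  toHP k (GP p) (Vk k) (ρ3 k p) (α • lam7 k p) (γ • κC7 k p) (β • κL7 k p)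

@[simp] lemma gAct_single (x : GP p) (r : k) :
    gAct k p (MonoidAlgebra.single x r) = r • WG k p x := by
  simp [gAct]

lemma freeAct_rel {s t} (h : PR k p α β γ s t) : freeAct k p α β γ s = freeAct k p α β γ t := by
  induction h with
  | unit => simp
  | gmul x y => simp
  | act g v =>
    have h1 := WG1 k p g
    have h2 := WG2 k p g
    have h3 := WG3 k p α β γ g
    simp [vAct, lam7, ρ3, E3, mul_add, add_mul, h1, h2, h3]
    module
  | comm v w =>
    have h1 := W12 k p
    have h2 := W13 k p α β γ
    have h3 := W23 k p α β γ
    simp [vAct, κC7, κL7, B3det, embVG, mul_add, add_mul, h1, h2, h3]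
    module

def act : HH k p α β γ →ₐ[k] Module.End k (BB k p) :=
  RingQuot.liftAlgHom k ⟨freeAct k p α β γ, fun _ _ h => freeAct_rel k p α β γ h⟩

@[simp] lemma act_toH (t) : act k p α β γ (toH k p α β γ t) = freeAct k p α β γ t := by
  simp [act, toHP]

def Φ : HH k p α β γ →ₗ[k] BB k p :=
  (LinearMap.applyₗ (ee k p 0 0 0 1)).comp (act k p α β γ).toLinearMap

lemma Φ_apply (h) : Φ k p α β γ h = act k p α β γ h (ee k p 0 0 0 1) := rfl

/-- generators of H -/
def hv (v : Vk k) : HH k p α β γ := toH k p α β γ (vIn k _ _ v)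
def h1 : HH k p α β γ := hv k p α β γ (Pi.single 0 1)
def h2 : HH k p α β γ := hv k p α β γ (Pi.single 1 1)
def h3 : HH k p α β γ := hv k p α β γ (Pi.single 2 1)
def hg (x : GP p) : HH k p α β γ := toH k p α β γ (gIn k _ _ (MonoidAlgebra.of k _ x))

lemma rel {s t} (h : PR k p α β γ s t) : toH k p α β γ s = toH k p α β γ t :=
  RingQuot.mkAlgHom_rel k h

lemma hg_one : hg k p α β γ 1 = 1 := by
  have := rel k p α β γ PRel.unit
  simpa [hg, MonoidAlgebra.one_def] using this
lemma toH_gmul (x y) : toH k p α β γ (gIn k _ _ (x * y)) =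
    toH k p α β γ (gIn k _ _ x) * toH k p α β γ (gIn k _ _ y) := by
  have := rel k p α β γ (PRel.gmul x y)
  simpa using this.symm
lemma hg_mul (x y) : hg k p α β γ (x * y) = hg k p α β γ x * hg k p α β γ y := by
  rw [hg, map_mul, toH_gmul]; rfl
lemma hact (x v) : hg k p α β γ x * hv k p α β γ v =
    hv k p α β γ (ρ3 k p x v) * hg k p α β γ x +
      (α * v 2 * cf k p x) • hg k p α β γ (x * (gg p)⁻¹) := by
  have := rel k p α β γ (PRel.act x v)
  simp only [map_mul, map_add] at this
  refine this.trans ?_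
  congr 1
  rw [hg, ← map_smul, ← map_smul]
  congr 2
  simp [lam7, mul_assoc]
lemma hcomm (v w) : hv k p α β γ v * hv k p α β γ w =
    hv k p α β γ w * hv k p α β γ v + B3det k v w • (β • h2 k p α β γ + γ • hg k p α β γ (gg p)) := by
  have := rel k p α β γ (PRel.comm v w)
  simp only [map_mul, map_add] at this
  refine this.trans ?_
  have h1 := hg_one k p α β γ
  simp only [hg, MonoidAlgebra.of_apply, ← MonoidAlgebra.one_def] at h1
  have e1 : (β • κL7 k p) v w = (β * B3det k v w) • (Pi.single (1 : Fin 3) (1 : k) ⊗ₜ[k]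
      (1 : MonoidAlgebra k (GP p))) := by
    simp [κL7, smul_smul]
  have e2 : (γ • κC7 k p) v w = (γ * B3det k v w) • MonoidAlgebra.of k _ (gg p) := by
    simp [κC7]
  have e3 : toH k p α β γ (embVG k _ _ (Pi.single (1 : Fin 3) (1 : k) ⊗ₜ[k]
      (1 : MonoidAlgebra k (GP p)))) = h2 k p α β γ := by
    simp only [embVG, LinearMap.comp_apply, TensorProduct.map_tmul, LinearMap.mul'_apply, map_mul,
      h1, mul_one]
    rfl
  rw [e1, e2, map_smul, map_smul, map_smul, map_smul, e3, ← hg]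
  change hv k p α β γ w * hv k p α β γ v + _ + _ = _
  module

lemma ρ_0 (x : GP p) : ρ3 k p x (Pi.single 0 1) = Pi.single 0 1 := by
  simp [ρ3, E3]
lemma ρ_1 (x : GP p) : ρ3 k p x (Pi.single 1 1) = Pi.single 1 1 := by
  simp [ρ3, E3]
lemma ρ_2 (x : GP p) : ρ3 k p x (Pi.single 2 1) = Pi.single 2 1 + cf k p x • Pi.single 0 1 := by
  simp [ρ3, E3]

lemma hg1 (x) : hg k p α β γ x * h1 k p α β γ = h1 k p α β γ * hg k p α β γ x := by
  rw [h1, hact, ρ_0]; simp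
lemma hg2 (x) : hg k p α β γ x * h2 k p α β γ = h2 k p α β γ * hg k p α β γ x := by
  rw [h2, hact, ρ_1]; simp
lemma hg3 (x) : hg k p α β γ x * h3 k p α β γ = h3 k p α β γ * hg k p α β γ x +
    cf k p x • (h1 k p α β γ * hg k p α β γ x + α • hg k p α β γ (x * (gg p)⁻¹)) := by
  rw [h3, hact, ρ_2]
  simp only [hv, h1, map_add, map_smul, add_mul, smul_mul_assoc, Pi.single_eq_same, mul_one]
  module
lemma h12 : h1 k p α β γ * h2 k p α β γ = h2 k p α β γ * h1 k p α β γ := by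
  rw [h1, h2, hcomm]; simp [B3det]
lemma h23 : h2 k p α β γ * h3 k p α β γ = h3 k p α β γ * h2 k p α β γ := by
  rw [h2, h3, hcomm]; simp [B3det]
lemma h13 : h1 k p α β γ * h3 k p α β γ = h3 k p α β γ * h1 k p α β γ +
    (β • h2 k p α β γ + γ • hg k p α β γ (gg p)) := by
  rw [h1, h3, hcomm]; simp [B3det]

def Ψ : BB k p →ₗ[k] HH k p α β γ := mk k p (fun a b c y =>
  h1 k p α β γ ^ a * h2 k p α β γ ^ b * hg k p α β γ y * h3 k p α β γ ^ c)

lemma Ψ_ee (a b c y) : Ψ k p α β γ (ee k p a b c y) =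
  h1 k p α β γ ^ a * h2 k p α β γ ^ b * hg k p α β γ y * h3 k p α β γ ^ c := by simp [Ψ]

lemma h3_pow (a : ℕ) : h3 k p α β γ * h1 k p α β γ ^ a = h1 k p α β γ ^ a * h3 k p α β γ -
    (a : k) • (h1 k p α β γ ^ (a-1) * (β • h2 k p α β γ + γ • hg k p α β γ (gg p))) := by
  induction a with
  | zero => simp
  | succ a ih =>
    have e : h1 k p α β γ * (β • h2 k p α β γ + γ • hg k p α β γ (gg p)) =
      (β • h2 k p α β γ + γ • hg k p α β γ (gg p)) * h1 k p α β γ := by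
      simp [mul_add, add_mul, h12, hg1]
    have e2 : h3 k p α β γ * h1 k p α β γ = h1 k p α β γ * h3 k p α β γ -
      (β • h2 k p α β γ + γ • hg k p α β γ (gg p)) := by rw [h13]; abel
    rw [pow_succ, ← mul_assoc, ih, sub_mul, mul_assoc, e2, mul_sub, smul_mul_assoc, mul_assoc _ _ (h1 k p α β γ), ← e, ← mul_assoc, ← mul_assoc]
    cases a with
    | zero => simp
    | succ a =>
      simp only [Nat.add_sub_cancel, ← pow_succ]
      push_cast
      module

lemma Ψ_W1 (f) : Ψ k p α β γ (W1 k p f) = h1 k p α β γ * Ψ k p α β γ f := by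
  have : (Ψ k p α β γ) ∘ₗ W1 k p = LinearMap.mulLeft k (h1 k p α β γ) ∘ₗ Ψ k p α β γ :=
    hom_ext k p (by
      intro a b c y
      simp [Ψ_ee, pow_succ', mul_assoc])
  exact LinearMap.congr_fun this f
lemma Ψ_W2 (f) : Ψ k p α β γ (W2 k p f) = h2 k p α β γ * Ψ k p α β γ f := by
  have : (Ψ k p α β γ) ∘ₗ W2 k p = LinearMap.mulLeft k (h2 k p α β γ) ∘ₗ Ψ k p α β γ :=
    hom_ext k p (by
      intro a b c y
      have c1 : Commute (h2 k p α β γ) (h1 k p α β γ ^ a) :=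
        Commute.pow_right (h12 k p α β γ).symm a
      simp only [LinearMap.comp_apply, LinearMap.mulLeft_apply, Ψ_ee, W2_ee, pow_succ', ← mul_assoc, c1.eq])
  exact LinearMap.congr_fun this f
lemma Ψ_WG (x f) : Ψ k p α β γ (WG k p x f) = hg k p α β γ x * Ψ k p α β γ f := by
  have : (Ψ k p α β γ) ∘ₗ WG k p x = LinearMap.mulLeft k (hg k p α β γ x) ∘ₗ Ψ k p α β γ :=
    hom_ext k p (by
      intro a b c y
      have c1 : Commute (hg k p α β γ x) (h1 k p α β γ ^ a) :=
        Commute.pow_right (hg1 k p α β γ x) a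
      have c2 : Commute (hg k p α β γ x) (h2 k p α β γ ^ b) :=
        Commute.pow_right (hg2 k p α β γ x) b
      have c3 := (c1.mul_right c2).eq
      simp only [LinearMap.comp_apply, LinearMap.mulLeft_apply, Ψ_ee, WG_ee, hg_mul]
      have := congrArg (fun z => z * (hg k p α β γ y * h3 k p α β γ ^ c)) c3
      simp only [mul_assoc] at this ⊢
      exact this.symm)
  exact LinearMap.congr_fun this f
lemma Ψ_W3 (f) : Ψ k p α β γ (W3 k p α β γ f) = h3 k p α β γ * Ψ k p α β γ f := by
  have : (Ψ k p α β γ) ∘ₗ W3 k p α β γ = LinearMap.mulLeft k (h3 k p α β γ) ∘ₗ Ψ k p α β γ :=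
    hom_ext k p (by
      intro a b c y
      have c2 : Commute (h3 k p α β γ) (h2 k p α β γ ^ b) :=
        Commute.pow_right (h23 k p α β γ).symm b
      have c3 : Commute (hg k p α β γ (gg p)) (h2 k p α β γ ^ b) :=
        Commute.pow_right (hg2 k p α β γ (gg p)) b
      have c4 : Commute (h1 k p α β γ) (h2 k p α β γ ^ b) :=
        Commute.pow_right (h12 k p α β γ) b
      have e3 : h3 k p α β γ * hg k p α β γ y = hg k p α β γ y * h3 k p α β γ -
        cf k p y • (h1 k p α β γ * hg k p α β γ y + α • hg k p α β γ (y * (gg p)⁻¹)) := by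
        rw [hg3]; abel
      have c5 : hg k p α β γ (gg p) * (h2 k p α β γ ^ b * (hg k p α β γ y * h3 k p α β γ ^ c)) =
        h2 k p α β γ ^ b * (hg k p α β γ (gg p) * (hg k p α β γ y * h3 k p α β γ ^ c)) := by
        rw [← mul_assoc, c3.eq, mul_assoc]
      have c6 : h2 k p α β γ ^ b * (h1 k p α β γ * (hg k p α β γ y * h3 k p α β γ ^ c)) =
        h1 k p α β γ * (h2 k p α β γ ^ b * (hg k p α β γ y * h3 k p α β γ ^ c)) := by
        rw [← mul_assoc, ← c4.eq, mul_assoc]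
      have key : h3 k p α β γ * (h1 k p α β γ ^ a * h2 k p α β γ ^ b * hg k p α β γ y * h3 k p α β γ ^ c)
        = h1 k p α β γ ^ a * (h2 k p α β γ ^ b * (hg k p α β γ y * h3 k p α β γ -
        cf k p y • (h1 k p α β γ * hg k p α β γ y + α • hg k p α β γ (y * (gg p)⁻¹)))) * h3 k p α β γ ^ c
         - (a : k) • (h1 k p α β γ ^ (a-1) * (β • h2 k p α β γ + γ • hg k p α β γ (gg p))) * (h2 k p α β γ ^ b * hg k p α β γ y * h3 k p α β γ ^ c) := by
        rw [← e3, ← mul_assoc (h2 k p α β γ ^ b), ← c2.eq]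
        have := congrArg (fun z => z * (h2 k p α β γ ^ b * hg k p α β γ y * h3 k p α β γ ^ c)) (h3_pow k p α β γ a)
        simp only [sub_mul] at this
        simp only [mul_assoc] at this ⊢
        exact this
      simp only [LinearMap.comp_apply, LinearMap.mulLeft_apply, Ψ_ee, W3_ee, key, map_sub, map_add, map_smul, hg_mul]
      simp only [mul_assoc, mul_sub, sub_mul, mul_add, add_mul, smul_mul_assoc, mul_smul_comm, smul_add, pow_succ', c5, c6]
      have c7 : h1 k p α β γ ^ a * (h1 k p α β γ * (h2 k p α β γ ^ b * (hg k p α β γ y * h3 k p α β γ ^ c))) =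
        h1 k p α β γ * (h1 k p α β γ ^ a * (h2 k p α β γ ^ b * (hg k p α β γ y * h3 k p α β γ ^ c))) := by
        rw [← mul_assoc, ← pow_succ, pow_succ', mul_assoc]
      rw [c7]
      module)
  exact LinearMap.congr_fun this f

lemma vAct_apply (v f) : vAct k p α β γ v f =
    v 0 • W1 k p f + v 1 • W2 k p f + v 2 • W3 k p α β γ f := by simp [vAct]
lemma hv_eq (v) : hv k p α β γ v =
    v 0 • h1 k p α β γ + v 1 • h2 k p α β γ + v 2 • h3 k p α β γ := by
  have : v = v 0 • Pi.single 0 1 + v 1 • Pi.single 1 1 + v 2 • Pi.single 2 1 := by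
    ext i; fin_cases i <;> simp
  conv_lhs => rw [this]
  simp only [hv, h1, h2, h3, map_add, map_smul]

lemma Ψ_gAct (x f) : Ψ k p α β γ (gAct k p x f) = toH k p α β γ (gIn k _ _ x) * Ψ k p α β γ f := by
  induction x using MonoidAlgebra.induction_linear with
  | zero => simp
  | add x y hx hy => simp [hx, hy, add_mul]
  | single x r =>
    have : MonoidAlgebra.single x r = r • MonoidAlgebra.of k _ x := by simp
    rw [this, map_smul, map_smul, map_smul, smul_mul_assoc, ← hg, ← Ψ_WG]
    simp

lemma Ψ_freeAct (t) : ∀ f, Ψ k p α β γ (freeAct k p α β γ t f) = toH k p α β γ t * Ψ k p α β γ f := by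
  induction t using TensorAlgebra.induction with
  | algebraMap r => intro f; simp [Algebra.algebraMap_eq_smul_one]
  | add x y hx hy => intro f; simp [hx, hy, add_mul]
  | mul x y hx hy => intro f; simp [hx, hy, mul_assoc]
  | ι x =>
    intro f
    have : TensorAlgebra.ι k x = gIn k _ _ x.1 + vIn k _ _ x.2 := by
      simp [gIn, vIn, ← map_add]
    rw [this]
    simp only [map_add, LinearMap.add_apply, freeAct_g, freeAct_v, add_mul, Ψ_gAct, vAct_apply]
    rw [← hv, hv_eq]
    simp [Ψ_W1, Ψ_W2, Ψ_W3, add_mul]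

lemma toH_surj : Function.Surjective (toH k p α β γ) := RingQuot.mkAlgHom_surjective k _

lemma ΨΦ (h) : Ψ k p α β γ (Φ k p α β γ h) = h := by
  obtain ⟨t, rfl⟩ := toH_surj k p α β γ h
  rw [Φ_apply, act_toH, Ψ_freeAct, Ψ_ee, hg_one]
  simp

lemma ΦΨ (f) : Φ k p α β γ (Ψ k p α β γ f) = f := by
  have : Φ k p α β γ ∘ₗ Ψ k p α β γ = LinearMap.id := hom_ext k p (by
    intro a b c y
    have a1 : act k p α β γ (h1 k p α β γ) = W1 k p := by
      ext1; simp [h1, hv, vAct]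
    have a2 : act k p α β γ (h2 k p α β γ) = W2 k p := by
      ext1; simp [h2, hv, vAct]
    have a3 : act k p α β γ (h3 k p α β γ) = W3 k p α β γ := by
      ext1; simp [h3, hv, vAct]
    have a4 : act k p α β γ (hg k p α β γ y) = WG k p y := by
      ext1; simp [hg]
    have p3 : ∀ c, (W3 k p α β γ ^ c) (ee k p 0 0 0 1) = ee k p 0 0 c 1 := by
      intro c
      induction c with
      | zero => simp
      | succ c ih => rw [pow_succ', Module.End.mul_apply, ih, W3_ee]; simp [cf_one]
    have p2 : ∀ b, (W2 k p ^ b) (ee k p 0 0 c y) = ee k p 0 b c y := by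
      intro c
      induction c with
      | zero => simp
      | succ c ih => rw [pow_succ', Module.End.mul_apply, ih, W2_ee]
    have p1 : ∀ a, (W1 k p ^ a) (ee k p 0 b c y) = ee k p a b c y := by
      intro c
      induction c with
      | zero => simp
      | succ c ih => rw [pow_succ', Module.End.mul_apply, ih, W1_ee]
    simp only [LinearMap.comp_apply, Ψ_ee, Φ_apply, map_mul, map_pow, a1, a2, a3, a4,
      Module.End.mul_apply, p3, WG_ee, mul_one, p2, p1, LinearMap.id_apply])
  exact LinearMap.congr_fun this f

def FF (d : ℕ) : Submodule k (BB k p) :=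
  Submodule.span k {f | ∃ a b c y, a + b + c ≤ d ∧ f = ee k p a b c y}

lemma ee_mem {a b c d : ℕ} (y : GP p) (h : a + b + c ≤ d) : ee k p a b c y ∈ FF k p d :=
  Submodule.subset_span ⟨a, b, c, y, h, rfl⟩

lemma FF_maps (T : Module.End k (BB k p)) (n d : ℕ)
    (h : ∀ a b c y, a + b + c ≤ d → T (ee k p a b c y) ∈ FF k p n) {f} (hf : f ∈ FF k p d) :
    T f ∈ FF k p n := by
  have : FF k p d ≤ (FF k p n).comap T := by
    refine Submodule.span_le.2 ?_
    rintro _ ⟨a, b, c, y, h', rfl⟩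
    exact h a b c y h'
  exact this hf

lemma FF_g (x) {d : ℕ} {f} (hf : f ∈ FF k p d) : gAct k p x f ∈ FF k p d := by
  induction x using MonoidAlgebra.induction_linear with
  | zero => simp
  | add x y hx hy => simpa using add_mem hx hy
  | single x r =>
    rw [gAct_single]
    refine Submodule.smul_mem _ _ (FF_maps k p _ d d ?_ hf)
    intro a b c y h
    rw [WG_ee]; exact ee_mem k p _ h

lemma FF_v (v) {d : ℕ} {f} (hf : f ∈ FF k p d) : vAct k p α β γ v f ∈ FF k p (d+1) := by
  rw [vAct_apply]
  refine add_mem (add_mem ?_ ?_) ?_ <;> refine Submodule.smul_mem _ _ (FF_maps k p _ _ d ?_ hf) <;>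
    intro a b c y h
  · rw [W1_ee]; exact ee_mem k p _ (by omega)
  · rw [W2_ee]; exact ee_mem k p _ (by omega)
  · rw [W3_ee]
    refine sub_mem (sub_mem ?_ (Submodule.smul_mem _ _ (add_mem (Submodule.smul_mem _ _ ?_) (Submodule.smul_mem _ _ ?_))))
      (Submodule.smul_mem _ _ (add_mem ?_ (Submodule.smul_mem _ _ ?_))) <;> exact ee_mem k p _ (by omega)

lemma FF_mono {m n : ℕ} (h : m ≤ n) : FF k p m ≤ FF k p n := by
  refine Submodule.span_le.2 ?_
  rintro _ ⟨a, b, c, y, h', rfl⟩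
  exact ee_mem k p _ (by omega)

lemma mem_grT0 {t} : t ∈ grT k (GP p) (Vk k) 0 ↔
    t ∈ Algebra.adjoin k (Set.range (gIn k (GP p) (Vk k))) := by
  rw [grT]; rfl

lemma grT_succ (n : ℕ) : grT k (GP p) (Vk k) (n+1) = grT k (GP p) (Vk k) n *
    (LinearMap.range (vIn k (GP p) (Vk k)) * grT k (GP p) (Vk k) 0) := grT.eq_2 _ _ _ n

lemma grT0_act {t} (ht : t ∈ grT k (GP p) (Vk k) 0) :
    ∀ {e : ℕ} {f}, f ∈ FF k p e → freeAct k p α β γ t f ∈ FF k p e := by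
  rw [mem_grT0] at ht
  induction ht using Algebra.adjoin_induction with
  | mem x hx =>
    obtain ⟨x, rfl⟩ := hx
    intro e f hf
    rw [freeAct_g]; exact FF_g k p x hf
  | algebraMap r =>
    intro e f hf
    simpa using Submodule.smul_mem _ r hf
  | add x y _ _ hx hy =>
    intro e f hf
    simpa using add_mem (hx hf) (hy hf)
  | mul x y _ _ hx hy =>
    intro e f hf
    simpa using hx (hy hf)

def SS (n : ℕ) : Submodule k (FreeAlg k (GP p) (Vk k)) where
  carrier := {t | ∀ e f, f ∈ FF k p e → freeAct k p α β γ t f ∈ FF k p (e + n)}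
  add_mem' hx hy e f hf := by simpa using add_mem (hx e f hf) (hy e f hf)
  zero_mem' e f hf := by simp
  smul_mem' r x hx e f hf := by simpa using Submodule.smul_mem _ r (hx e f hf)

lemma grT_le (n : ℕ) : grT k (GP p) (Vk k) n ≤ SS k p α β γ n := by
  induction n with
  | zero => intro t ht e f hf; exact grT0_act k p α β γ ht hf
  | succ n ih =>
    rw [grT, Submodule.mul_le]
    intro t ht s hs
    have hs' : s ∈ SS k p α β γ 1 := by
      revert s
      change _ ≤ SS k p α β γ 1
      rw [Submodule.mul_le]
      rintro _ ⟨v, rfl⟩ s hs e f hf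
      rw [map_mul, Module.End.mul_apply, freeAct_v]
      exact FF_v k p α β γ v (grT0_act k p α β γ hs hf)
    intro e f hf
    rw [map_mul, Module.End.mul_apply]
    have := ih ht _ _ (hs' e f hf)
    rwa [add_assoc, add_comm 1 n] at this

lemma filtT_le (n : ℕ) : ∀ t ∈ filtT k (GP p) (Vk k) n,
    freeAct k p α β γ t (ee k p 0 0 0 1) ∈ FF k p n := by
  have aux : ∀ n, ∀ t ∈ grT k (GP p) (Vk k) n,
    freeAct k p α β γ t (ee k p 0 0 0 1) ∈ FF k p n := by
    intro n t ht
    have := grT_le k p α β γ n ht 0 (ee k p 0 0 0 1) (ee_mem k p _ (by omega))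
    rwa [zero_add] at this
  induction n with
  | zero => exact aux 0
  | succ n ih =>
    intro t ht
    obtain ⟨x, hx, y, hy, rfl⟩ := Submodule.mem_sup.1 ht
    rw [map_add, LinearMap.add_apply]
    exact add_mem (FF_mono k p (Nat.le_succ n) (ih x hx)) (aux _ y hy)

lemma one_grT : (1 : FreeAlg k (GP p) (Vk k)) ∈ grT k (GP p) (Vk k) 0 :=
  (mem_grT0 k p).2 (one_mem _)

lemma grT_v {n : ℕ} {t} (ht : t ∈ grT k (GP p) (Vk k) n) (v) :
    t * vIn k _ _ v ∈ grT k (GP p) (Vk k) (n+1) := by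
  rw [grT]
  refine Submodule.mul_mem_mul ht ?_
  rw [← mul_one (vIn k _ _ v)]
  exact Submodule.mul_mem_mul ⟨v, rfl⟩ (one_grT k p)

lemma grT_vpow {n : ℕ} {t} (ht : t ∈ grT k (GP p) (Vk k) n) (v) (m : ℕ) :
    t * vIn k _ _ v ^ m ∈ grT k (GP p) (Vk k) (n+m) := by
  induction m with
  | zero => simpa using ht
  | succ m ih => rw [pow_succ, ← mul_assoc]; exact grT_v k p ih v

lemma grT_g {n : ℕ} {t} (ht : t ∈ grT k (GP p) (Vk k) n) (x) :
    t * gIn k _ _ x ∈ grT k (GP p) (Vk k) n := by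
  have hx : gIn k _ _ x ∈ Algebra.adjoin k (Set.range (gIn k (GP p) (Vk k))) :=
    Algebra.subset_adjoin ⟨x, rfl⟩
  cases n with
  | zero => exact (mem_grT0 k p).2 (mul_mem ((mem_grT0 k p).1 ht) hx)
  | succ n =>
    have : grT k (GP p) (Vk k) (n+1) * (grT k (GP p) (Vk k) 0) ≤ grT k (GP p) (Vk k) (n+1) := by
      rw [grT_succ, mul_assoc, mul_assoc]
      refine mul_le_mul' le_rfl (mul_le_mul' le_rfl ?_)
      rw [Submodule.mul_le]
      intro a ha b hb
      exact (mem_grT0 k p).2 (mul_mem ((mem_grT0 k p).1 ha) ((mem_grT0 k p).1 hb))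
    exact this (Submodule.mul_mem_mul ht ((mem_grT0 k p).2 hx))

lemma grT_filtT (n : ℕ) : grT k (GP p) (Vk k) n ≤ filtT k (GP p) (Vk k) n := by
  cases n with
  | zero => exact le_rfl
  | succ n => exact le_sup_right

lemma filtT_mono : Monotone (filtT k (GP p) (Vk k)) :=
  monotone_nat_of_le_succ (fun _ => le_sup_left)

abbrev fP (d : ℕ) := filtP k (GP p) (Vk k) (ρ3 k p) (α • lam7 k p) (γ • κC7 k p) (β • κL7 k p) d

lemma Ψ_mem {d : ℕ} {f} (hf : f ∈ FF k p d) : Ψ k p α β γ f ∈ fP k p α β γ d := by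
  have : FF k p d ≤ (fP k p α β γ d).comap (Ψ k p α β γ) := by
    refine Submodule.span_le.2 ?_
    rintro _ ⟨a, b, c, y, h', rfl⟩
    refine ⟨1 * vIn k _ _ (Pi.single 0 1) ^ a * vIn k _ _ (Pi.single 1 1) ^ b *
      gIn k _ _ (MonoidAlgebra.of k _ y) * vIn k _ _ (Pi.single 2 1) ^ c, ?_, ?_⟩
    · refine filtT_mono k p (show 0 + a + b + c ≤ d by omega) (grT_filtT k p _ ?_)
      exact grT_vpow k p (grT_g k p (grT_vpow k p (grT_vpow k p (one_grT k p) _ _) _ _) _) _ _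
    · rw [Ψ_ee]
      simp only [AlgHom.toLinearMap_apply, map_mul, map_pow, map_one, one_mul]
      rfl
  exact this hf

lemma finrank_fP (d : ℕ) : Module.finrank k (fP k p α β γ d) = Module.finrank k (FF k p d) := by
  have hinj : Function.Injective (Φ k p α β γ) :=
    Function.LeftInverse.injective (ΨΦ k p α β γ)
  have hmap : (fP k p α β γ d).map (Φ k p α β γ) = FF k p d := by
    apply le_antisymm
    · rintro _ ⟨_, ⟨t, ht, rfl⟩, rfl⟩
      have := filtT_le k p α β γ d t ht
      rw [← act_toH] at this
      exact this
    · intro f hf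
      exact ⟨_, Ψ_mem k p α β γ hf, ΦΨ k p α β γ f⟩
  rw [← hmap]
  exact (Submodule.equivMapOfInjective _ hinj _).finrank_eq

lemma finrank_gen (d : ℕ) (l C L) (hl : l = α • lam7 k p) (hC : C = γ • κC7 k p)
    (hL : L = β • κL7 k p) :
    Module.finrank k (filtP k (GP p) (Vk k) (ρ3 k p) l C L d) = Module.finrank k (FF k p d) := by
  subst hl hC hL
  exact finrank_fP k p α β γ d

end TransvPBW

/-- **Example (Section 5)** of Shepler–Witherspoon, "Deforming group actions on Koszul
algebras": in characteristic `p > 2`, for the cyclic group `G = ⟨g⟩` of order `p`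
acting on `V = k v₁ ⊕ k v₂ ⊕ k v₃` by the transvection fixing `v₁, v₂` and sending
`v₃ ↦ v₁ + v₃`, the parameters `λ(gⁱ,v₃) = i g^{i−1}`, `κ^C(v₁,v₃) = g = −κ^C(v₃,v₁)`,
`κ^L(v₁,v₃) = v₂ ⊗ 1 = −κ^L(v₃,v₁)` (zero on all other pairs of basis vectors) define
a PBW deformation `H_{λ,κ}` of `S(V) ⋊ G`. -/
theorem example_transvection_is_PBW_deformation
    (k : Type) [Field k] (p : ℕ) [Fact p.Prime] (hp : 2 < p) [CharP k p] :
    IsPBWP k (Multiplicative (ZMod p)) (Fin 3 → k) (ρ3 k p) (lam7 k p) (κC7 k p) (κL7 k p) := by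
  intro d
  exact (TransvPBW.finrank_gen k p 1 1 1 d _ _ _ (one_smul _ _).symm (one_smul _ _).symm
    (one_smul _ _).symm).trans (TransvPBW.finrank_gen k p 0 0 0 d _ _ _ (zero_smul _ _).symm
    (zero_smul _ _).symm (zero_smul _ _).symm).symm
end
end

section
/- Let k have prime characteristic p > 2, let V = kv ⊕ kw, and let G = ⟨g⟩ ≤ GL_2(k) be the cyclic group of order p generated by g with ᵍv = v and ᵍw = v + w. Define λ(g^i, v) = i g^i for all i, λ(1, w) = λ(g, w) = 0, λ(g^i, w) = binom(i,2) g^i for i ≥ 2, and κ = 0. Then H_{λ,0} = T_{kG}(kG⊗V⊗kG)/( gv − vg − g, gw − vg − wg, vw − wv ) is a PBW deformation of S(V)⋊G. -/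
open TensorProduct

noncomputable section

namespace DeformKoszul

variable (k G V : Type) [Field k] [Group G] [AddCommGroup V] [Module k V]

variable (ρ : Representation k G V)

variable (lam : G → V →ₗ[k] MonoidAlgebra k G)
    (κC : V →ₗ[k] V →ₗ[k] MonoidAlgebra k G)
    (κL : V →ₗ[k] V →ₗ[k] (V ⊗[k] MonoidAlgebra k G))

section Example8


variable (k : Type) [Field k] (p : ℕ) [Fact p.Prime] [CharP k p]

/-- the nilpotent part on `k²`: `f ↦ f(1)·e₀`. -/
def E2 : (Fin 2 → k) →ₗ[k] (Fin 2 → k) :=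
  (LinearMap.single k (fun _ => k) 0).comp (LinearMap.proj 1)

lemma E2sq : (E2 k) * (E2 k) = 0 := by
  ext f i
  simp [E2, Module.End.mul_apply, Pi.single_apply]

/-- the representation of `G = ⟨g⟩ ≅ ℤ/p` on `V = kv ⊕ kw` with `ᵍv = v`,
`ᵍw = v + w` (so `v = e₀`, `w = e₁`). -/
def ρ2 : Representation k (Multiplicative (ZMod p)) (Fin 2 → k) where
  toFun x := 1 + cf k p x • E2 k
  map_one' := by simp [cf_one]
  map_mul' x y := by
    show 1 + cf k p (x * y) • E2 k = (1 + cf k p x • E2 k) * (1 + cf k p y • E2 k)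
    rw [cf_mul, add_smul, mul_add, add_mul, add_mul, mul_one, one_mul, smul_mul_smul_comm,
      E2sq, smul_zero]
    simp only [mul_one]
    abel

/-- `λ(gⁱ, v) = i·gⁱ`, `λ(1,w) = λ(g,w) = 0`, `λ(gⁱ, w) = (i choose 2)·gⁱ = (i(i−1)/2)·gⁱ`. -/
def lam8 : Multiplicative (ZMod p) → (Fin 2 → k) →ₗ[k] MonoidAlgebra k (Multiplicative (ZMod p)) :=
  fun x =>
    (LinearMap.proj 0 : ((Fin 2 → k)) →ₗ[k] k).smulRight
      (cf k p x • MonoidAlgebra.single x (1 : k))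
    + (LinearMap.proj 1 : ((Fin 2 → k)) →ₗ[k] k).smulRight
      ((cf k p x * (cf k p x - 1) / 2) • MonoidAlgebra.single x (1 : k))

end Example8

end DeformKoszul

namespace DeformKoszul

section Proof

section
variable {R : Type} {A : Type} [CommSemiring R] [Semiring A] [Algebra R A]

lemma mulMono {M N P Q : Submodule R A} (h : M ≤ P) (h' : N ≤ Q) : M * N ≤ P * Q :=
  Submodule.mul_le.2 fun _ hm _ hn => Submodule.mul_mem_mul (h hm) (h' hn)

lemma mulR {M N P : Submodule R A} (h : N ≤ P) : M * N ≤ M * P := mulMono le_rfl h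

lemma mulL {M N P : Submodule R A} (h : M ≤ N) : M * P ≤ N * P := mulMono h le_rfl
end

variable (k : Type) [Field k] (p : ℕ) [Fact p.Prime] [CharP k p] (c : k)

abbrev GG := Multiplicative (ZMod p)
abbrev AA := MvPolynomial (Fin 2) k

/-- the algebra `H` with parameter `c • λ`. -/
abbrev HH := HP k (GG p) (Fin 2 → k) (ρ2 k p) (c • lam8 k p) 0 0

def sMap (x : GG p) : (Fin 2 → k) →ₗ[k] AA k :=
  (LinearMap.proj 0 : (Fin 2 → k) →ₗ[k] k).smulRight
      (MvPolynomial.X 0 + MvPolynomial.C (c * cf k p x))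
  + (LinearMap.proj 1 : (Fin 2 → k) →ₗ[k] k).smulRight
      (MvPolynomial.X 1 + MvPolynomial.C (cf k p x) * MvPolynomial.X 0
        + MvPolynomial.C (c * (cf k p x * (cf k p x - 1) / 2)))

lemma two_ne (hp : 2 < p) : (2 : k) ≠ 0 := by
  intro h
  have : ((2 : ℕ) : k) = 0 := by exact_mod_cast h
  rw [CharP.cast_eq_zero_iff k p] at this
  exact absurd (Nat.le_of_dvd (by norm_num) this) (by omega)

/-- coefficient of `λ(x,u)` on `x`. -/
def ell (x : GG p) (u : Fin 2 → k) : k :=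
  c * (u 0 * cf k p x + u 1 * (cf k p x * (cf k p x - 1) / 2))

lemma lam_eq (x : GG p) (u : Fin 2 → k) :
    (c • lam8 k p) x u = ell k p c x u • MonoidAlgebra.of k (GG p) x := by
  simp [lam8, ell, mul_add]

lemma sMap_mul (hp : 2 < p) (x h : GG p) (u : Fin 2 → k) :
    sMap k p c (x * h) u = sMap k p c x (ρ2 k p h u) + MvPolynomial.C (ell k p c h u) := by
  have h2 := two_ne k p hp
  have hc : ∀ a b : k, (a + b) * (a + b - 1) / 2 = a * (a-1)/2 + b * (b-1)/2 + a * b := by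
    intro a b; field_simp; ring
  simp only [sMap, ell, ρ2, E2, cf_mul, hc]
  simp [MvPolynomial.smul_eq_C_mul]
  ring

lemma sMap_one (u : Fin 2 → k) :
    sMap k p c 1 u = u 0 • MvPolynomial.X 0 + u 1 • MvPolynomial.X 1 := by
  simp [sMap, cf_one]

abbrev MM := GG p → AA k

def gActM : GG p →* Module.End k (MM k p) where
  toFun h := LinearMap.funLeft k (AA k) (fun x => x * h)
  map_one' := by ext; simp [LinearMap.funLeft]
  map_mul' a b := by
    apply LinearMap.ext; intro f; funext x
    simp [LinearMap.funLeft_apply, Module.End.mul_apply, mul_assoc]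

def gAct : MonoidAlgebra k (GG p) →ₐ[k] Module.End k (MM k p) :=
  MonoidAlgebra.lift k _ (GG p) (gActM k p)

lemma gAct_of (h : GG p) (f : MM k p) (x : GG p) :
    gAct k p (MonoidAlgebra.of k (GG p) h) f x = f (x * h) := by
  simp [gAct, gActM, LinearMap.funLeft_apply]

def vAct : (Fin 2 → k) →ₗ[k] Module.End k (MM k p) :=
  (Algebra.lmul k (MM k p)).toLinearMap.comp (LinearMap.pi (fun x => sMap k p c x))

lemma vAct_apply (u : Fin 2 → k) (f : MM k p) (x : GG p) :
    vAct k p c u f x = sMap k p c x u * f x := by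
  simp [vAct]

def phi0 : FreeAlg k (GG p) (Fin 2 → k) →ₐ[k] Module.End k (MM k p) :=
  TensorAlgebra.lift k (LinearMap.coprod (gAct k p).toLinearMap (vAct k p c))

lemma phi0_g (x) : phi0 k p c (gIn _ _ _ x) = gAct k p x := by
  simp [phi0, gIn]

lemma phi0_v (x) : phi0 k p c (vIn _ _ _ x) = vAct k p c x := by
  simp [phi0, vIn]

def phi (hp : 2 < p) : HH k p c →ₐ[k] Module.End k (MM k p) :=
  RingQuot.liftAlgHom k ⟨phi0 k p c, by
    intro a b hab
    cases hab with
    | unit => simp [phi0_g]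
    | gmul x y => simp [phi0_g]
    | act g v =>
      rw [map_mul, map_add, map_mul]
      simp only [phi0_g, phi0_v, lam_eq, map_smul]
      apply LinearMap.ext; intro f; funext x
      simp only [Module.End.mul_apply, LinearMap.add_apply, LinearMap.smul_apply, Pi.add_apply,
        Pi.smul_apply, gAct_of, vAct_apply, sMap_mul k p c hp, MvPolynomial.smul_eq_C_mul]
      ring
    | comm v w =>
      simp only [map_mul, map_add, phi0_v, LinearMap.zero_apply, map_zero, add_zero]
      apply LinearMap.ext; intro f; funext x
      simp only [Module.End.mul_apply, vAct_apply]
      ring⟩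

def q : FreeAlg k (GG p) (Fin 2 → k) →ₐ[k] HH k p c :=
  toHP k (GG p) (Fin 2 → k) (ρ2 k p) (c • lam8 k p) 0 0

lemma phi_q (hp : 2 < p) (a) : phi k p c hp (q k p c a) = phi0 k p c a := by
  simp [phi, q, toHP]

lemma q_rel {a b} (h : PRel k (GG p) (Fin 2 → k) (ρ2 k p) (c • lam8 k p) 0 0 a b) :
    q k p c a = q k p c b := RingQuot.mkAlgHom_rel k h

def gH : MonoidAlgebra k (GG p) →ₐ[k] HH k p c :=
  AlgHom.ofLinearMap ((q k p c).toLinearMap.comp (gIn k (GG p) (Fin 2 → k)))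
    (by simpa using q_rel k p c PRel.unit)
    (by intro x y; simpa using (q_rel k p c (PRel.gmul x y)).symm)

lemma gH_eq (x) : gH k p c x = q k p c (gIn _ _ _ x) := rfl

def vH : (Fin 2 → k) →ₗ[k] HH k p c :=
  (q k p c).toLinearMap.comp (vIn k (GG p) (Fin 2 → k))

lemma vH_eq (x) : vH k p c x = q k p c (vIn _ _ _ x) := rfl

lemma vH_comm (u w) : vH k p c u * vH k p c w = vH k p c w * vH k p c u := by
  simpa [← vH_eq] using q_rel k p c (PRel.comm u w)

lemma act_H (g : GG p) (u : Fin 2 → k) :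
    gH k p c (MonoidAlgebra.of k _ g) * vH k p c u =
      vH k p c (ρ2 k p g u) * gH k p c (MonoidAlgebra.of k _ g)
        + ell k p c g u • gH k p c (MonoidAlgebra.of k _ g) := by
  have := q_rel k p c (PRel.act g u)
  rw [lam_eq] at this
  simpa only [map_mul, map_add, map_smul, ← vH_eq, ← gH_eq] using this

def Γ : Submodule k (HH k p c) := Subalgebra.toSubmodule (gH k p c).range
def W : Submodule k (HH k p c) := LinearMap.range (vH k p c)
def U : Submodule k (HH k p c) := 1 ⊔ W k p c

lemma map_gr0 : (grT k (GG p) (Fin 2 → k) 0).map (q k p c).toLinearMap = Γ k p c := by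
  rw [grT, Γ, ← Subalgebra.map_toSubmodule, AlgHom.map_adjoin]
  congr 1
  have : (q k p c) '' (Set.range (gIn k (GG p) (Fin 2 → k))) = Set.range (gH k p c) := by
    rw [← Set.range_comp]; rfl
  rw [this]
  apply le_antisymm
  · exact Algebra.adjoin_le (by rw [AlgHom.coe_range])
  · rintro _ ⟨y, rfl⟩
    exact Algebra.subset_adjoin ⟨y, rfl⟩

lemma map_v : (LinearMap.range (vIn k (GG p) (Fin 2 → k))).map (q k p c).toLinearMap
    = W k p c := by
  rw [← LinearMap.range_comp]; rfl

def gr (n : ℕ) := (grT k (GG p) (Fin 2 → k) n).map (q k p c).toLinearMap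
def F (n : ℕ) := (filtT k (GG p) (Fin 2 → k) n).map (q k p c).toLinearMap

lemma gr_succ (n : ℕ) : gr k p c (n+1) = gr k p c n * (W k p c * Γ k p c) := by
  rw [gr, grT, Submodule.map_mul, Submodule.map_mul, map_gr0, map_v]; rfl

lemma F_succ (n : ℕ) : F k p c (n+1) = F k p c n ⊔ gr k p c (n+1) := by
  rw [F, filtT, Submodule.map_sup]; rfl

lemma one_le_Γ : 1 ≤ Γ k p c := by
  rw [Submodule.one_le]; exact one_mem (gH k p c).range

lemma Γ_mul : Γ k p c * Γ k p c = Γ k p c := by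
  apply le_antisymm
  · rw [Submodule.mul_le]
    intro a ha b hb
    exact mul_mem (S := Subalgebra k (HH k p c)) (s := (gH k p c).range) ha hb
  · calc Γ k p c = Γ k p c * 1 := (mul_one _).symm
      _ ≤ _ := mulR (one_le_Γ k p c)

lemma Γ_span : Γ k p c = Submodule.span k
    (Set.range fun g : GG p => gH k p c (MonoidAlgebra.of k _ g)) := by
  apply le_antisymm
  · rintro _ ⟨y, rfl⟩
    show gH k p c y ∈ _
    induction y using MonoidAlgebra.induction_on with
    | of g => exact Submodule.subset_span ⟨g, rfl⟩
    | add a b ha hb => rw [map_add]; exact add_mem ha hb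
    | smul r a ha => rw [map_smul]; exact Submodule.smul_mem _ _ ha
  · rw [Submodule.span_le]
    rintro _ ⟨g, rfl⟩
    exact ⟨_, rfl⟩

lemma one_le_U : 1 ≤ U k p c := le_sup_left
lemma W_le_U : W k p c ≤ U k p c := le_sup_right

lemma W_Γ : W k p c * Γ k p c ≤ Γ k p c * U k p c := by
  rw [Submodule.mul_le]
  rintro _ ⟨u, rfl⟩ y hy
  rw [Γ_span] at hy
  induction hy using Submodule.span_induction with
  | mem y hy =>
    obtain ⟨g, rfl⟩ := hy
    have h := act_H k p c g (ρ2 k p g⁻¹ u)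
    rw [← Module.End.mul_apply, ← map_mul, mul_inv_cancel, map_one, Module.End.one_apply] at h
    have hg : gH k p c (MonoidAlgebra.of k _ g) ∈ Γ k p c := ⟨_, rfl⟩
    show vH k p c u * gH k p c (MonoidAlgebra.of k _ g) ∈ _
    rw [← sub_eq_iff_eq_add] at h
    rw [← h]
    apply sub_mem
    · exact Submodule.mul_mem_mul hg (W_le_U k p c ⟨_, rfl⟩)
    · apply Submodule.smul_mem
      rw [← mul_one (gH k p c (MonoidAlgebra.of k _ g))]
      exact Submodule.mul_mem_mul hg (one_le_U k p c (Submodule.one_le.1 le_rfl))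
  | zero => rw [mul_zero]; exact zero_mem _
  | add a b _ _ ha hb => rw [mul_add]; exact add_mem ha hb
  | smul r a _ ha => rw [mul_smul_comm]; exact Submodule.smul_mem _ _ ha

lemma U_Γ : U k p c * Γ k p c ≤ Γ k p c * U k p c := by
  rw [U, Submodule.sup_mul, one_mul]
  refine sup_le ?_ (W_Γ k p c)
  calc Γ k p c = Γ k p c * 1 := (mul_one _).symm
    _ ≤ _ := mulR (one_le_U k p c)

lemma Un_Γ (n : ℕ) : U k p c ^ n * Γ k p c ≤ Γ k p c * U k p c ^ n := by
  induction n with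
  | zero => simp
  | succ n ih =>
    calc U k p c ^ (n+1) * Γ k p c = U k p c ^ n * (U k p c * Γ k p c) := by
          rw [pow_succ, mul_assoc]
      _ ≤ U k p c ^ n * (Γ k p c * U k p c) := mulR (U_Γ k p c)
      _ = (U k p c ^ n * Γ k p c) * U k p c := by rw [mul_assoc]
      _ ≤ (Γ k p c * U k p c ^ n) * U k p c := mulL ih
      _ = _ := by rw [mul_assoc, pow_succ]

lemma gr_le (n : ℕ) : gr k p c n ≤ Γ k p c * U k p c ^ n := by
  induction n with
  | zero => rw [gr, map_gr0]; simp
  | succ n ih =>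
    rw [gr_succ]
    calc gr k p c n * (W k p c * Γ k p c)
        ≤ (Γ k p c * U k p c ^ n) * (Γ k p c * U k p c) := mulMono ih (W_Γ k p c)
      _ = Γ k p c * ((U k p c ^ n * Γ k p c) * U k p c) := by simp only [mul_assoc]
      _ ≤ Γ k p c * ((Γ k p c * U k p c ^ n) * U k p c) :=
          mulR (mulL (Un_Γ k p c n))
      _ = (Γ k p c * Γ k p c) * (U k p c ^ (n+1)) := by simp only [mul_assoc, pow_succ]
      _ = _ := by rw [Γ_mul]

lemma F_mul_W (n : ℕ) : F k p c n * W k p c ≤ F k p c (n+1) := by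
  have key : ∀ n, gr k p c n * W k p c ≤ F k p c (n+1) := by
    intro n
    rw [F_succ, gr_succ]
    refine le_trans ?_ le_sup_right
    refine mulR ?_
    calc W k p c = W k p c * 1 := (mul_one _).symm
      _ ≤ _ := mulR (one_le_Γ k p c)
  induction n with
  | zero => exact key 0
  | succ n ih =>
    rw [F_succ, Submodule.sup_mul]
    refine sup_le (ih.trans ?_) (key _)
    rw [F_succ k p c (n+1)]; exact le_sup_left

lemma F_eq (n : ℕ) : F k p c n = Γ k p c * U k p c ^ n := by
  apply le_antisymm
  · induction n with
    | zero => exact gr_le k p c 0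
    | succ n ih =>
      rw [F_succ]
      refine sup_le (ih.trans (mulR ?_)) (gr_le k p c _)
      calc U k p c ^ n = U k p c ^ n * 1 := (mul_one _).symm
        _ ≤ U k p c ^ n * U k p c := mulR (one_le_U k p c)
        _ = _ := (pow_succ _ _).symm
  · induction n with
    | zero => rw [F, filtT, map_gr0]; simp
    | succ n ih =>
      rw [pow_succ, ← mul_assoc]
      refine (mulL ih).trans ?_
      rw [U, Submodule.mul_sup, mul_one]
      refine sup_le ?_ (F_mul_W k p c n)
      rw [F_succ]; exact le_sup_left

abbrev Ix (n : ℕ) := {ab : ℕ × ℕ // ab.1 + ab.2 ≤ n}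

def vv : HH k p c := vH k p c (Pi.single 0 1)
def ww : HH k p c := vH k p c (Pi.single 1 1)

lemma vw : vv k p c * ww k p c = ww k p c * vv k p c := vH_comm _ _ _ _ _

lemma vv_mem : vv k p c ∈ U k p c := W_le_U k p c ⟨_, rfl⟩
lemma ww_mem : ww k p c ∈ U k p c := W_le_U k p c ⟨_, rfl⟩

lemma vH_expand (u : Fin 2 → k) : vH k p c u = u 0 • vv k p c + u 1 • ww k p c := by
  rw [vv, ww, ← map_smul, ← map_smul, ← map_add]
  congr 1
  ext i; fin_cases i <;> simp

lemma U_pow_mono {m n : ℕ} (h : m ≤ n) : U k p c ^ m ≤ U k p c ^ n := by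
  induction h with
  | refl => exact le_rfl
  | @step n _ ih =>
    refine ih.trans ?_
    calc U k p c ^ n = U k p c ^ n * 1 := (mul_one _).symm
        _ ≤ U k p c ^ n * U k p c := mulR (one_le_U k p c)
        _ = _ := (pow_succ _ _).symm

lemma U_pow (n : ℕ) : U k p c ^ n = Submodule.span k
    (Set.range fun i : Ix n => vv k p c ^ i.1.1 * ww k p c ^ i.1.2) := by
  apply le_antisymm
  · induction n with
    | zero =>
      rw [pow_zero, Submodule.one_le]
      exact Submodule.subset_span ⟨⟨(0,0), by simp⟩, by simp⟩
    | succ n ih =>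
      rw [pow_succ]
      refine (mulL ih).trans ?_
      have hm : ∀ a b : ℕ, a + b ≤ n + 1 → vv k p c ^ a * ww k p c ^ b ∈ Submodule.span k
          (Set.range fun i : Ix (n+1) => vv k p c ^ i.1.1 * ww k p c ^ i.1.2) :=
        fun a b h => Submodule.subset_span ⟨⟨(a,b), h⟩, rfl⟩
      rw [U, Submodule.mul_sup, mul_one]
      refine sup_le ?_ ?_
      · rw [Submodule.span_le]
        rintro _ ⟨⟨⟨a, b⟩, h⟩, rfl⟩
        exact hm a b (by simp at h; omega)
      · rw [Submodule.mul_le]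
        rintro y hy _ ⟨u, rfl⟩
        induction hy using Submodule.span_induction with
        | mem y hy =>
          obtain ⟨⟨⟨a, b⟩, h⟩, rfl⟩ := hy
          simp only at h
          rw [vH_expand, mul_add, mul_smul_comm, mul_smul_comm]
          refine add_mem (Submodule.smul_mem _ _ ?_) (Submodule.smul_mem _ _ ?_)
          · have hc : Commute (vv k p c) (ww k p c ^ b) :=
              Commute.pow_right (vw k p c) b
            have := hm (a+1) b (by omega)
            rw [pow_succ, mul_assoc, hc.eq, ← mul_assoc] at this
            exact this
          · have := hm a (b+1) (by omega)
            rw [pow_succ, ← mul_assoc] at this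
            exact this
        | zero => rw [zero_mul]; exact zero_mem _
        | add a b _ _ ha hb => rw [add_mul]; exact add_mem ha hb
        | smul r a _ ha => rw [smul_mul_assoc]; exact Submodule.smul_mem _ _ ha
  · rw [Submodule.span_le]
    rintro _ ⟨⟨⟨a, b⟩, h⟩, rfl⟩
    apply U_pow_mono k p c h
    rw [pow_add]
    exact Submodule.mul_mem_mul (Submodule.pow_mem_pow _ (vv_mem k p c) _)
      (Submodule.pow_mem_pow _ (ww_mem k p c) _)

def bas (i : GG p × (ℕ × ℕ)) : HH k p c :=
  gH k p c (MonoidAlgebra.of k _ i.1) * (vv k p c ^ i.2.1 * ww k p c ^ i.2.2)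

def inj (n : ℕ) (i : GG p × Ix n) : GG p × (ℕ × ℕ) := (i.1, i.2.1)

lemma inj_inj (n : ℕ) : Function.Injective (inj p n) := by
  rintro ⟨a, b⟩ ⟨a', b'⟩ h
  simp only [inj, Prod.mk.injEq] at h
  exact Prod.ext h.1 (Subtype.ext h.2)

lemma F_span (n : ℕ) : F k p c n = Submodule.span k (Set.range (bas k p c ∘ inj p n)) := by
  rw [F_eq, Γ_span, U_pow, Submodule.span_mul_span]
  congr 1
  ext y
  constructor
  · rintro ⟨_, ⟨g, rfl⟩, _, ⟨i, rfl⟩, rfl⟩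
    exact ⟨(g, i), rfl⟩
  · rintro ⟨⟨g, i⟩, rfl⟩
    exact ⟨_, ⟨g, rfl⟩, _, ⟨i, rfl⟩, rfl⟩

def Psi (hp : 2 < p) : HH k p c →ₗ[k] MM k p :=
  (LinearMap.applyₗ (Pi.single 1 1 : MM k p)).comp (phi k p c hp).toLinearMap

lemma phi_v (hp : 2 < p) (u) : phi k p c hp (vH k p c u) = vAct k p c u := by
  rw [vH_eq, phi_q, phi0_v]

lemma phi_g (hp : 2 < p) (u) : phi k p c hp (gH k p c u) = gAct k p u := by
  rw [gH_eq, phi_q, phi0_g]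

lemma vAct_pow (u : Fin 2 → k) (n : ℕ) (f : MM k p) (x : GG p) :
    (vAct k p c u ^ n) f x = sMap k p c x u ^ n * f x := by
  induction n with
  | zero => simp
  | succ n ih => rw [pow_succ', Module.End.mul_apply, vAct_apply, ih, pow_succ']; ring

def mono (ab : ℕ × ℕ) : AA k := MvPolynomial.X 0 ^ ab.1 * MvPolynomial.X 1 ^ ab.2

lemma Psi_bas (hp : 2 < p) (i : GG p × (ℕ × ℕ)) :
    Psi k p c hp (bas k p c i) = Pi.single i.1⁻¹ (mono k i.2) := by
  obtain ⟨g, a, b⟩ := i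
  funext x
  have : Psi k p c hp (bas k p c (g, a, b)) x =
    phi k p c hp (bas k p c (g, a, b)) (Pi.single 1 1) x := rfl
  rw [this]
  simp only [bas, map_mul, map_pow, vv, ww, phi_v, phi_g]
  simp only [Module.End.mul_apply, gAct_of, vAct_pow]
  by_cases hx : x = g⁻¹
  · subst hx
    simp [sMap_one, mono]
  · have : x * g ≠ 1 := fun h => hx (eq_inv_of_mul_eq_one_left h)
    simp [hx, this]

lemma mono_li : LinearIndependent k (mono k) := by
  have h := (MvPolynomial.basisMonomials (Fin 2) k).linearIndependent
  have h2 := h.comp (fun ab : ℕ × ℕ => (Finsupp.single 0 ab.1 + Finsupp.single 1 ab.2 : Fin 2 →₀ ℕ))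
    (by
      rintro ⟨a, b⟩ ⟨a', b'⟩ hab
      have h0 := DFunLike.congr_fun hab 0
      have h1 := DFunLike.congr_fun hab 1
      simp at h0 h1
      rw [h0, h1])
  have e : mono k = (MvPolynomial.basisMonomials (Fin 2) k) ∘
      (fun ab : ℕ × ℕ => (Finsupp.single 0 ab.1 + Finsupp.single 1 ab.2 : Fin 2 →₀ ℕ)) := by
    funext ⟨a, b⟩
    simp [mono, MvPolynomial.X_pow_eq_monomial, MvPolynomial.monomial_mul]
  rw [e]
  exact h2

lemma bas_li (hp : 2 < p) : LinearIndependent k (bas k p c) := by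
  apply LinearIndependent.of_comp (Psi k p c hp)
  have h := Pi.linearIndependent_single (R := k) (fun (_ : GG p) => mono k)
    (fun _ => mono_li k)
  have h2 := h.comp (fun i : GG p × (ℕ × ℕ) => (⟨i.1⁻¹, i.2⟩ : Σ _ : GG p, ℕ × ℕ))
    (by
      rintro ⟨a, b⟩ ⟨a', b'⟩ hab
      simpa using hab)
  have e : Psi k p c hp ∘ bas k p c = fun i => Pi.single i.1⁻¹ (mono k i.2) :=
    funext (Psi_bas k p c hp)
  rw [e]
  exact h2

lemma finrank_filt (hp : 2 < p) (n : ℕ) :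
    Module.finrank k (filtP k (GG p) (Fin 2 → k) (ρ2 k p) (c • lam8 k p) 0 0 n)
      = Nat.card (GG p × Ix n) := by
  have h : filtP k (GG p) (Fin 2 → k) (ρ2 k p) (c • lam8 k p) 0 0 n = F k p c n := rfl
  rw [h, F_span]
  exact Module.finrank_eq_nat_card_basis
    (Module.Basis.span ((bas_li k p c hp).comp _ (inj_inj p n)))

end Proof

end DeformKoszul

open DeformKoszul

/-- **Example 5.3** of Shepler–Witherspoon, "Deforming group actions on Koszul
algebras": in characteristic `p > 2`, for the cyclic group `G = ⟨g⟩` of order `p`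
acting on `V = kv ⊕ kw` by `ᵍv = v`, `ᵍw = v + w`, the parameters
`λ(gⁱ, v) = i gⁱ`, `λ(1,w) = λ(g,w) = 0`, `λ(gⁱ,w) = (i choose 2) gⁱ` and `κ = 0`
define a PBW deformation `H_{λ,0}` of `S(V) ⋊ G`. -/
theorem example_jordan_block_is_PBW_deformation
    (k : Type) [Field k] (p : ℕ) [Fact p.Prime] (hp : 2 < p) [CharP k p] :
    IsPBWP k (Multiplicative (ZMod p)) (Fin 2 → k) (ρ2 k p) (lam8 k p) 0 0 := by
  intro d
  have h1 := finrank_filt k p 1 hp d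
  have h0 := finrank_filt k p 0 hp d
  rw [one_smul] at h1
  rw [zero_smul] at h0
  exact h1.trans h0.symm
end
end

section
/- Suppose G acts linearly on a finite dimensional vector space V over a field k whose characteristic is coprime to |G|. If H_{λ,κ} is a PBW deformation of S(V)⋊G for some parameter functions λ: kG×V → kG and κ: V×V → kG ⊕ (V⊗kG), then there exists a parameter function κ': V×V → kG ⊕ (V⊗kG) such that H_{λ,κ} ≅ H_{0,κ'} as filtered algebras, and consequently H_{0,κ'} also has the PBW property. -/
open TensorProduct

noncomputable section

namespace DeformKoszul

variable (k G V : Type) [Field k] [Group G] [AddCommGroup V] [Module k V]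

variable (ρ : Representation k G V)

variable (lam : G → V →ₗ[k] MonoidAlgebra k G)
    (κC : V →ₗ[k] V →ₗ[k] MonoidAlgebra k G)
    (κL : V →ₗ[k] V →ₗ[k] (V ⊗[k] MonoidAlgebra k G))

set_option linter.unusedSectionVars false

section helpers

variable {k G V} {ρ} {lam} {κC} {κL}

/-- The free algebra hom determined by linear maps on the two summands. -/
def freeLift {A : Type} [Ring A] [Algebra k A] (f : MonoidAlgebra k G →ₗ[k] A) (φ : V →ₗ[k] A) :
    FreeAlg k G V →ₐ[k] A := TensorAlgebra.lift k (f.coprod φ)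

lemma freeLift_gIn {A : Type} [Ring A] [Algebra k A] (f : MonoidAlgebra k G →ₗ[k] A)
    (φ : V →ₗ[k] A) (x) : freeLift f φ (gIn k G V x) = f x := by
  simp [freeLift, gIn]

lemma freeLift_vIn {A : Type} [Ring A] [Algebra k A] (f : MonoidAlgebra k G →ₗ[k] A)
    (φ : V →ₗ[k] A) (x) : freeLift f φ (vIn k G V x) = φ x := by
  simp [freeLift, vIn]

lemma free_ext {A : Type} [Ring A] [Algebra k A] {F F' : FreeAlg k G V →ₐ[k] A}
    (hg : ∀ x, F (gIn k G V x) = F' (gIn k G V x))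
    (hv : ∀ x, F (vIn k G V x) = F' (vIn k G V x)) : F = F' := by
  apply TensorAlgebra.hom_ext
  apply LinearMap.prod_ext
  · refine LinearMap.ext fun x => ?_
    exact hg x
  · refine LinearMap.ext fun x => ?_
    exact hv x

variable (ρ lam κC κL) in
/-- Group algebra into `H`. -/
def iG : MonoidAlgebra k G →ₐ[k] HP k G V ρ lam κC κL :=
  AlgHom.ofLinearMap ((toHP k G V ρ lam κC κL).toLinearMap.comp (gIn k G V))
    (by
      have := RingQuot.mkAlgHom_rel k (PRel.unit (ρ := ρ) (lam := lam) (κC := κC) (κL := κL))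
      simpa [toHP] using this)
    (by
      intro x y
      have := RingQuot.mkAlgHom_rel k
        (PRel.gmul (ρ := ρ) (lam := lam) (κC := κC) (κL := κL) x y)
      simpa [toHP] using this.symm)

variable (ρ lam κC κL) in
/-- `V` into `H`. -/
def iV : V →ₗ[k] HP k G V ρ lam κC κL :=
  (toHP k G V ρ lam κC κL).toLinearMap.comp (vIn k G V)

lemma toHP_gIn (x) : toHP k G V ρ lam κC κL (gIn k G V x) = iG ρ lam κC κL x := rfl
lemma toHP_vIn (x) : toHP k G V ρ lam κC κL (vIn k G V x) = iV ρ lam κC κL x := rfl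

/-- `V ⊗ kG → A`. -/
def mulT {A : Type} [Ring A] [Algebra k A] (f : MonoidAlgebra k G →ₗ[k] A) (φ : V →ₗ[k] A) :
    V ⊗[k] MonoidAlgebra k G →ₗ[k] A :=
  (LinearMap.mul' k _).comp (TensorProduct.map φ f)

lemma map_embVG {A : Type} [Ring A] [Algebra k A] (F : FreeAlg k G V →ₐ[k] A)
    (t) : F (embVG k G V t) = mulT (F.toLinearMap.comp (gIn k G V))
      (F.toLinearMap.comp (vIn k G V)) t := by
  induction t with
  | zero => simp
  | tmul x y => simp [embVG, mulT]
  | add x y hx hy => simp [hx, hy]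

lemma i_act (g : G) (v : V) :
    iG ρ lam κC κL (MonoidAlgebra.of k G g) * iV ρ lam κC κL v =
      iV ρ lam κC κL (ρ g v) * iG ρ lam κC κL (MonoidAlgebra.of k G g)
        + iG ρ lam κC κL (lam g v) := by
  have := RingQuot.mkAlgHom_rel k
        (PRel.act (ρ := ρ) (lam := lam) (κC := κC) (κL := κL) g v)
  simp only [map_mul, map_add] at this
  exact this

lemma i_comm (v w : V) :
    iV ρ lam κC κL v * iV ρ lam κC κL w = iV ρ lam κC κL w * iV ρ lam κC κL v
      + mulT (iG ρ lam κC κL).toLinearMap (iV ρ lam κC κL) (κL v w)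
      + iG ρ lam κC κL (κC v w) := by
  have := RingQuot.mkAlgHom_rel k
        (PRel.comm (ρ := ρ) (lam := lam) (κC := κC) (κL := κL) v w)
  simp only [map_mul, map_add, map_embVG] at this
  exact this

/-- Universal property. -/
def liftHP {A : Type} [Ring A] [Algebra k A] (f : MonoidAlgebra k G →ₐ[k] A) (φ : V →ₗ[k] A)
    (hact : ∀ g v, f (MonoidAlgebra.of k G g) * φ v =
      φ (ρ g v) * f (MonoidAlgebra.of k G g) + f (lam g v))
    (hcomm : ∀ v w, φ v * φ w = φ w * φ v + mulT f.toLinearMap φ (κL v w) + f (κC v w)) :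
    HP k G V ρ lam κC κL →ₐ[k] A :=
  RingQuot.liftAlgHom k ⟨freeLift f.toLinearMap φ, by
    have e1 : (freeLift f.toLinearMap φ).toLinearMap.comp (gIn k G V) = f.toLinearMap :=
      LinearMap.ext fun x => freeLift_gIn _ _ x
    have e2 : (freeLift f.toLinearMap φ).toLinearMap.comp (vIn k G V) = φ :=
      LinearMap.ext fun x => freeLift_vIn _ _ x
    intro x y h
    cases h with
    | unit => simp [freeLift_gIn]
    | gmul x y => simp [freeLift_gIn]
    | act g v =>
      simp only [map_mul, map_add, freeLift_gIn, freeLift_vIn]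
      exact hact g v
    | comm v w =>
      simp only [map_mul, map_add, freeLift_gIn, freeLift_vIn, map_embVG, e1, e2]
      exact hcomm v w⟩

lemma liftHP_toHP {A : Type} [Ring A] [Algebra k A] (f : MonoidAlgebra k G →ₐ[k] A)
    (φ : V →ₗ[k] A) (hact) (hcomm) (x) :
    liftHP (ρ := ρ) (lam := lam) (κC := κC) (κL := κL) f φ hact hcomm
      (toHP k G V ρ lam κC κL x) = freeLift f.toLinearMap φ x := by
  simp [liftHP, toHP]

lemma HP_ext {A : Type} [Ring A] [Algebra k A] {F F' : HP k G V ρ lam κC κL →ₐ[k] A}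
    (hg : ∀ x, F (iG ρ lam κC κL x) = F' (iG ρ lam κC κL x))
    (hv : ∀ x, F (iV ρ lam κC κL x) = F' (iV ρ lam κC κL x)) : F = F' := by
  apply RingQuot.ringQuot_ext'
  exact free_ext hg hv

/-- filtration lemmas -/
lemma filtT_mul_gr0 (n : ℕ) : filtT k G V n * grT k G V 0 ≤ filtT k G V n := by
  have h0 : grT k G V 0 * grT k G V 0 ≤ grT k G V 0 := by
    rw [grT, Submodule.mul_le]
    intro a ha b hb
    exact Subalgebra.mul_mem _ ha hb
  induction n with
  | zero => exact h0
  | succ n ih =>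
    rw [filtT, Submodule.sup_mul]
    refine sup_le_sup ih ?_
    rw [grT.eq_2, mul_assoc, mul_assoc]
    gcongr

lemma filtT_mul_V (n : ℕ) :
    filtT k G V n * (LinearMap.range (vIn k G V) * grT k G V 0) ≤ filtT k G V (n+1) := by
  induction n with
  | zero =>
    rw [filtT.eq_2, filtT.eq_1, grT.eq_2]
    exact le_sup_right
  | succ n ih =>
    rw [filtT, Submodule.sup_mul]
    rw [filtT.eq_2 k G V (n+1)]
    refine sup_le_sup ih ?_
    rw [grT.eq_2 k G V (n+1)]

lemma filtT_mono_succ (n : ℕ) : filtT k G V n ≤ filtT k G V (n+1) := by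
  rw [filtT.eq_2]
  exact le_sup_left

lemma mem_gr0 (x) : x ∈ grT k G V 0 ↔ x ∈ Algebra.adjoin k (Set.range (gIn k G V)) := by
  rw [grT.eq_1, Subalgebra.mem_toSubmodule]

/-- The shift of generators on the free algebra. -/
def shift (γ : V →ₗ[k] MonoidAlgebra k G) : FreeAlg k G V →ₐ[k] FreeAlg k G V :=
  freeLift (gIn k G V) (vIn k G V + (gIn k G V).comp γ)

lemma shift_gr (γ : V →ₗ[k] MonoidAlgebra k G) (n : ℕ) :
    (grT k G V n).map (shift γ).toLinearMap ≤ filtT k G V n := by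
  have h0 : (grT k G V 0).map (shift γ).toLinearMap ≤ grT k G V 0 := by
    rintro _ ⟨x, hx, rfl⟩
    have : Algebra.adjoin k (Set.range (gIn k G V)) ≤
        (Algebra.adjoin k (Set.range (gIn k G V))).comap (shift γ) := by
      apply Algebra.adjoin_le
      rintro _ ⟨y, rfl⟩
      apply Algebra.subset_adjoin
      exact ⟨y, (freeLift_gIn _ _ _).symm⟩
    have hx' := this ((mem_gr0 x).mp hx)
    exact (mem_gr0 _).mpr hx'
  induction n with
  | zero => exact h0
  | succ n ih =>
    rw [grT, Submodule.map_mul, Submodule.map_mul]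
    have h1 : (LinearMap.range (vIn k G V)).map (shift γ).toLinearMap ≤
        LinearMap.range (vIn k G V) ⊔ grT k G V 0 := by
      rintro _ ⟨_, ⟨v, rfl⟩, rfl⟩
      have : (shift γ).toLinearMap (vIn k G V v) = vIn k G V v + gIn k G V (γ v) :=
        freeLift_vIn _ _ _
      rw [this]
      exact Submodule.add_mem_sup ⟨v, rfl⟩
        ((mem_gr0 _).mpr (Algebra.subset_adjoin ⟨_, rfl⟩))
    refine (mul_le_mul' ih (mul_le_mul' h1 h0)).trans ?_
    rw [Submodule.sup_mul, Submodule.mul_sup]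
    refine sup_le (filtT_mul_V n) ?_
    rw [← mul_assoc]
    refine (mul_le_mul' (filtT_mul_gr0 n) le_rfl).trans ?_
    exact (filtT_mul_gr0 n).trans (filtT_mono_succ n)

lemma shift_filt (γ : V →ₗ[k] MonoidAlgebra k G) (n : ℕ) :
    (filtT k G V n).map (shift γ).toLinearMap ≤ filtT k G V n := by
  induction n with
  | zero => exact shift_gr γ 0
  | succ n ih =>
    rw [filtT, Submodule.map_sup]
    exact sup_le (ih.trans (filtT_mono_succ n)) (shift_gr γ (n+1))

lemma map_filtP_le {lam' : G → V →ₗ[k] MonoidAlgebra k G}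
    {κC' : V →ₗ[k] V →ₗ[k] MonoidAlgebra k G}
    {κL' : V →ₗ[k] V →ₗ[k] (V ⊗[k] MonoidAlgebra k G)} (γ : V →ₗ[k] MonoidAlgebra k G)
    (F : HP k G V ρ lam κC κL →ₐ[k] HP k G V ρ lam' κC' κL')
    (hg : ∀ x, F (iG ρ lam κC κL x) = iG ρ lam' κC' κL' x)
    (hv : ∀ x, F (iV ρ lam κC κL x) = iV ρ lam' κC' κL' x + iG ρ lam' κC' κL' (γ x)) (d : ℕ) :
    (filtP k G V ρ lam κC κL d).map F.toLinearMap ≤ filtP k G V ρ lam' κC' κL' d := by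
  have h : F.comp (toHP k G V ρ lam κC κL) = (toHP k G V ρ lam' κC' κL').comp (shift γ) := by
    apply free_ext
    · intro x
      simp [shift, freeLift_gIn, toHP_gIn, hg]
    · intro x
      simp [shift, freeLift_vIn, toHP_gIn, toHP_vIn, hv]
  rintro _ ⟨_, ⟨x, hx, rfl⟩, rfl⟩
  refine ⟨shift γ x, shift_filt γ d ⟨x, hx, rfl⟩, ?_⟩
  exact (AlgHom.congr_fun h x).symm

lemma filtP_zero : filtP k G V ρ lam κC κL 0 = LinearMap.range (iG ρ lam κC κL).toLinearMap := by
  have : (Algebra.adjoin k (Set.range (gIn k G V))).map (toHP k G V ρ lam κC κL)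
      = (iG ρ lam κC κL).range := by
    rw [AlgHom.map_adjoin, ← Set.range_comp]
    apply le_antisymm
    · apply Algebra.adjoin_le
      rintro _ ⟨x, rfl⟩
      exact ⟨x, rfl⟩
    · rintro _ ⟨x, rfl⟩
      exact Algebra.subset_adjoin ⟨x, rfl⟩
  have h := congrArg Subalgebra.toSubmodule this
  rw [filtP, filtT.eq_1, grT.eq_1]
  exact h

lemma iG0_inj : Function.Injective (iG (k := k) (G := G) (V := V) ρ 0 0 0) := by
  let F : HP k G V ρ 0 0 0 →ₐ[k] MonoidAlgebra k G :=
    liftHP (AlgHom.id k _) 0 (by simp) (by simp)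
  have : ∀ x, F (iG ρ 0 0 0 x) = x := by
    intro x
    rw [← toHP_gIn]
    simp only [F]
    rw [liftHP_toHP, freeLift_gIn]
    rfl
  exact Function.LeftInverse.injective this

lemma iG_inj [Finite G] (h : IsPBWP k G V ρ lam κC κL) : Function.Injective (iG ρ lam κC κL) := by
  have : Module.Finite k (MonoidAlgebra k G) := Module.Finite.of_basis (MonoidAlgebra.basis G k)
  have h0 := h 0
  rw [filtP_zero, filtP_zero,
    LinearMap.finrank_range_of_inj (f := (iG (k := k) (G := G) (V := V) ρ 0 0 0).toLinearMap)
      iG0_inj] at h0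
  have h1 := LinearMap.finrank_range_add_finrank_ker (iG ρ lam κC κL).toLinearMap
  have h3 : LinearMap.ker (iG ρ lam κC κL).toLinearMap = ⊥ := by
    apply Submodule.finrank_eq_zero.mp
    omega
  exact LinearMap.ker_eq_bot.mp h3

lemma lam_cocycle (h : Function.Injective (iG ρ lam κC κL)) (g g' : G) (v : V) :
    lam (g * g') v = lam g (ρ g' v) * MonoidAlgebra.of k G g'
      + MonoidAlgebra.of k G g * lam g' v := by
  apply h
  have h1 := i_act (ρ := ρ) (lam := lam) (κC := κC) (κL := κL) (g * g') v
  have h2 := i_act (ρ := ρ) (lam := lam) (κC := κC) (κL := κL) g' v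
  have h3 := i_act (ρ := ρ) (lam := lam) (κC := κC) (κL := κL) g (ρ g' v)
  rw [map_mul, map_mul, mul_assoc, h2, mul_add, ← mul_assoc, h3, map_mul,
    Module.End.mul_apply, add_mul, mul_assoc, add_assoc] at h1
  rw [map_add, map_mul, map_mul]
  exact (add_left_cancel h1).symm

variable (ρ lam) in
/-- The averaging correction. -/
def gam [Fintype G] : V →ₗ[k] MonoidAlgebra k G :=
  (Fintype.card G : k)⁻¹ • ∑ h : G,
    (LinearMap.mulRight k (MonoidAlgebra.of k G h⁻¹)).comp ((lam h).comp (ρ h⁻¹))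

lemma gam_spec [Fintype G] (hcard : (Fintype.card G : k) ≠ 0)
    (hinj : Function.Injective (iG ρ lam κC κL)) (g : G) (v : V) :
    MonoidAlgebra.of k G g * gam ρ lam v + lam g v
      = gam ρ lam (ρ g v) * MonoidAlgebra.of k G g := by
  have hl : lam g v = (Fintype.card G : k)⁻¹ • ∑ h : G, lam g v := by
    rw [Finset.sum_const, Finset.card_univ, ← Nat.cast_smul_eq_nsmul k, smul_smul,
      inv_mul_cancel₀ hcard, one_smul]
  rw [hl]
  simp only [gam, LinearMap.smul_apply, LinearMap.sum_apply, LinearMap.comp_apply,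
    LinearMap.mulRight_apply, mul_smul_comm, smul_mul_assoc, ← smul_add]
  congr 1
  rw [Finset.mul_sum, Finset.sum_mul, ← Finset.sum_add_distrib]
  refine Fintype.sum_equiv (Equiv.mulLeft g) _ _ ?_
  intro h
  have hc := lam_cocycle hinj g h (ρ h⁻¹ v)
  have e1 : ρ h (ρ h⁻¹ v) = v := by
    rw [← Module.End.mul_apply, ← map_mul]; simp
  have e2 : ρ (g * h)⁻¹ (ρ g v) = ρ h⁻¹ v := by
    rw [← Module.End.mul_apply, ← map_mul]; simp
  rw [e1] at hc
  simp only [Equiv.coe_mulLeft, e2]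
  rw [hc, mul_assoc, ← map_mul, add_mul, mul_assoc, ← map_mul]
  simp [mul_assoc, add_comm, ← MonoidAlgebra.one_def]

variable (ρ) in
/-- `D(g,w) = (ᵍw - w) ⊗ g`. -/
def DD : MonoidAlgebra k G →ₗ[k] V →ₗ[k] V ⊗[k] MonoidAlgebra k G :=
  (MonoidAlgebra.basis G k).constr k fun g =>
    ((TensorProduct.mk k V (MonoidAlgebra k G)).flip (MonoidAlgebra.of k G g)).comp
      (ρ g - LinearMap.id)

lemma DD_of (g : G) (w : V) : DD ρ (MonoidAlgebra.of k G g) w =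
    (ρ g w - w) ⊗ₜ MonoidAlgebra.of k G g := by
  have : MonoidAlgebra.of k G g = MonoidAlgebra.basis G k g := by simp
  rw [DD]
  conv_lhs => rw [this, Module.Basis.constr_basis]
  simp [TensorProduct.sub_tmul]

lemma comm_DD {A : Type} [Ring A] [Algebra k A] (f : MonoidAlgebra k G →ₐ[k] A) (φ : V →ₗ[k] A)
    (hact : ∀ g v, f (MonoidAlgebra.of k G g) * φ v =
      φ (ρ g v) * f (MonoidAlgebra.of k G g)) (x : MonoidAlgebra k G) (w : V) :
    f x * φ w = φ w * f x + mulT f.toLinearMap φ (DD ρ x w) := by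
  induction x using MonoidAlgebra.induction_on with
  | of g => 
    rw [DD_of, hact]
    simp [mulT, sub_mul]
  | add x y hx hy => 
    simp only [map_add, add_mul, mul_add, hx, hy, LinearMap.add_apply]
    abel
  | smul r x hx => simp [hx]

/-- `mulT` with shifted `φ`. -/
lemma mulT_shift {A : Type} [Ring A] [Algebra k A] (f : MonoidAlgebra k G →ₐ[k] A)
    (φ : V →ₗ[k] A) (γ : V →ₗ[k] MonoidAlgebra k G) (t) :
    mulT f.toLinearMap (φ + f.toLinearMap.comp γ) t =
      mulT f.toLinearMap φ t + f (mulT LinearMap.id γ t) := by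
  induction t with
  | zero => simp
  | tmul x y => simp [mulT, add_mul]
  | add x y hx hy => simp only [map_add, hx, hy]; abel

variable (ρ κL) in
/-- New linear part. -/
def newL (γ : V →ₗ[k] MonoidAlgebra k G) : V →ₗ[k] V →ₗ[k] (V ⊗[k] MonoidAlgebra k G) :=
  (DD ρ).comp γ - ((DD ρ).comp γ).flip + κL

variable (κC κL) in
/-- New constant part. -/
def newC (γ : V →ₗ[k] MonoidAlgebra k G) : V →ₗ[k] V →ₗ[k] MonoidAlgebra k G :=
  κC - κL.compr₂ (mulT LinearMap.id γ) - (LinearMap.mul k (MonoidAlgebra k G)).compl₁₂ γ γ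
    + ((LinearMap.mul k (MonoidAlgebra k G)).compl₁₂ γ γ).flip

lemma act_back {A : Type} [Ring A] [Algebra k A] (f : MonoidAlgebra k G →ₐ[k] A)
    (φ : V →ₗ[k] A) (γ : V →ₗ[k] MonoidAlgebra k G)
    (hγ : ∀ g v, MonoidAlgebra.of k G g * γ v + lam g v = γ (ρ g v) * MonoidAlgebra.of k G g)
    (hact : ∀ g v, f (MonoidAlgebra.of k G g) * φ v =
      φ (ρ g v) * f (MonoidAlgebra.of k G g) + f (lam g v)) (g : G) (v : V) :
    f (MonoidAlgebra.of k G g) * (φ + f.toLinearMap.comp γ) v =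
      (φ + f.toLinearMap.comp γ) (ρ g v) * f (MonoidAlgebra.of k G g) := by
  have h := congrArg f (hγ g v)
  rw [map_add, map_mul, map_mul] at h
  simp only [LinearMap.add_apply, LinearMap.comp_apply, AlgHom.toLinearMap_apply, mul_add,
    add_mul, hact, ← h]
  abel

lemma act_fwd {A : Type} [Ring A] [Algebra k A] (f : MonoidAlgebra k G →ₐ[k] A)
    (φ : V →ₗ[k] A) (γ : V →ₗ[k] MonoidAlgebra k G)
    (hγ : ∀ g v, MonoidAlgebra.of k G g * γ v + lam g v = γ (ρ g v) * MonoidAlgebra.of k G g)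
    (hact : ∀ g v, f (MonoidAlgebra.of k G g) * φ v =
      φ (ρ g v) * f (MonoidAlgebra.of k G g)) (g : G) (v : V) :
    f (MonoidAlgebra.of k G g) * (φ + f.toLinearMap.comp (-γ)) v =
      (φ + f.toLinearMap.comp (-γ)) (ρ g v) * f (MonoidAlgebra.of k G g) + f (lam g v) := by
  have h := congrArg f (hγ g v)
  rw [map_add, map_mul, map_mul, ← eq_sub_iff_add_eq'] at h
  simp only [LinearMap.add_apply, LinearMap.comp_apply, AlgHom.toLinearMap_apply, mul_add,
    add_mul, hact, h, LinearMap.neg_apply, map_neg, mul_neg, neg_mul]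
  abel

lemma comm_back {A : Type} [Ring A] [Algebra k A] (f : MonoidAlgebra k G →ₐ[k] A)
    (φ : V →ₗ[k] A) (γ : V →ₗ[k] MonoidAlgebra k G)
    (hactB : ∀ g v, f (MonoidAlgebra.of k G g) * (φ + f.toLinearMap.comp γ) v =
      (φ + f.toLinearMap.comp γ) (ρ g v) * f (MonoidAlgebra.of k G g)) (v w : V)
    (h1 : φ v * φ w = φ w * φ v + mulT f.toLinearMap φ (κL v w) + f (κC v w)) :
    (φ + f.toLinearMap.comp γ) v * (φ + f.toLinearMap.comp γ) w =
      (φ + f.toLinearMap.comp γ) w * (φ + f.toLinearMap.comp γ) v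
      + mulT f.toLinearMap (φ + f.toLinearMap.comp γ) (newL ρ κL γ v w)
      + f (newC κC κL γ v w) := by
  have e1 := comm_DD f _ hactB (γ v) w
  have e2 := comm_DD f _ hactB (γ w) v
  have h2 := mulT_shift f φ γ (κL v w)
  have hLv : newL ρ κL γ v w = DD ρ (γ v) w - DD ρ (γ w) v + κL v w := rfl
  have hCv : newC κC κL γ v w = κC v w - mulT LinearMap.id γ (κL v w) - γ v * γ w + γ w * γ v :=
    rfl
  rw [← sub_eq_iff_eq_add'] at e1 e2
  rw [hLv, hCv]
  simp only [map_add, map_sub, map_mul]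
  rw [← e1, ← e2, h2]
  simp only [LinearMap.add_apply, LinearMap.comp_apply, AlgHom.toLinearMap_apply, mul_add,
    add_mul, h1]
  abel

lemma comm_fwd {A : Type} [Ring A] [Algebra k A] (f : MonoidAlgebra k G →ₐ[k] A)
    (φ : V →ₗ[k] A) (γ : V →ₗ[k] MonoidAlgebra k G)
    (hact : ∀ g v, f (MonoidAlgebra.of k G g) * φ v =
      φ (ρ g v) * f (MonoidAlgebra.of k G g)) (v w : V)
    (h1 : φ v * φ w = φ w * φ v + mulT f.toLinearMap φ (newL ρ κL γ v w)
      + f (newC κC κL γ v w)) :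
    (φ + f.toLinearMap.comp (-γ)) v * (φ + f.toLinearMap.comp (-γ)) w =
      (φ + f.toLinearMap.comp (-γ)) w * (φ + f.toLinearMap.comp (-γ)) v
      + mulT f.toLinearMap (φ + f.toLinearMap.comp (-γ)) (κL v w) + f (κC v w) := by
  have e1 := comm_DD f _ hact (γ v) w
  have e2 := comm_DD f _ hact (γ w) v
  have h2 := mulT_shift f φ (-γ) (κL v w)
  have h3 : mulT LinearMap.id (-γ) (κL v w) = - mulT LinearMap.id γ (κL v w) := by
    generalize κL v w = t
    induction t with
    | zero => simp
    | tmul x y => simp [mulT]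
    | add x y hx hy => simp only [map_add, hx, hy]; abel
  have hLv : newL ρ κL γ v w = DD ρ (γ v) w - DD ρ (γ w) v + κL v w := rfl
  have hCv : newC κC κL γ v w = κC v w - mulT LinearMap.id γ (κL v w) - γ v * γ w + γ w * γ v :=
    rfl
  rw [h2, h3]
  rw [hLv, hCv] at h1
  simp only [map_add, map_sub, map_mul] at h1
  simp only [LinearMap.add_apply, LinearMap.comp_apply, AlgHom.toLinearMap_apply, mul_add,
    add_mul, LinearMap.neg_apply, map_neg, mul_neg, neg_mul, h1, e1, e2]
  abel

lemma main_equiv (γ : V →ₗ[k] MonoidAlgebra k G)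
    (hγ : ∀ g v, MonoidAlgebra.of k G g * γ v + lam g v = γ (ρ g v) * MonoidAlgebra.of k G g) :
    ∃ e : HP k G V ρ lam κC κL ≃ₐ[k] HP k G V ρ 0 (newC κC κL γ) (newL ρ κL γ),
        ∀ d, Submodule.map (e.toLinearEquiv : _ →ₗ[k] _) (filtP k G V ρ lam κC κL d)
          = filtP k G V ρ 0 (newC κC κL γ) (newL ρ κL γ) d := by
  set κC' := newC κC κL γ with hC'
  set κL' := newL ρ κL γ with hL'
  let f := iG ρ lam κC κL
  let f' := iG ρ 0 κC' κL'
  let φ := iV ρ lam κC κL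
  let φ' := iV ρ 0 κC' κL'
  have hactB := act_back f φ γ hγ i_act
  let B : HP k G V ρ 0 κC' κL' →ₐ[k] HP k G V ρ lam κC κL :=
    liftHP f (φ + f.toLinearMap.comp γ) (by intro g v; rw [hactB]; simp)
      (fun v w => comm_back f φ γ hactB v w (i_comm v w))
  have hactF0 : ∀ g v, f' (MonoidAlgebra.of k G g) * φ' v =
      φ' (ρ g v) * f' (MonoidAlgebra.of k G g) := by
    intro g v
    have h1 : f' (MonoidAlgebra.of k G g) * φ' v = _ := i_act g v
    rw [h1]; simp [φ', f']
  let F : HP k G V ρ lam κC κL →ₐ[k] HP k G V ρ 0 κC' κL' :=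
    liftHP f' (φ' + f'.toLinearMap.comp (-γ)) (act_fwd f' φ' γ hγ hactF0)
      (fun v w => comm_fwd f' φ' γ hactF0 v w (i_comm v w))
  have Fg : ∀ x, F (f x) = f' x := fun x => by
    simp only [F, f]; rw [← toHP_gIn, liftHP_toHP, freeLift_gIn]; rfl
  have Fv : ∀ x, F (φ x) = φ' x + f' ((-γ) x) := fun x => by
    simp only [F, φ]; rw [← toHP_vIn, liftHP_toHP, freeLift_vIn]; rfl
  have Bg : ∀ x, B (f' x) = f x := fun x => by
    simp only [B, f']; rw [← toHP_gIn, liftHP_toHP, freeLift_gIn]; rfl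
  have Bv : ∀ x, B (φ' x) = φ x + f (γ x) := fun x => by
    simp only [B, φ']; rw [← toHP_vIn, liftHP_toHP, freeLift_vIn]; rfl
  have FB : F.comp B = AlgHom.id k _ := by
    apply HP_ext
    · intro x
      change F (B (f' x)) = f' x
      rw [Bg, Fg]
    · intro x
      change F (B (φ' x)) = φ' x
      rw [Bv, map_add, Fv, Fg]; simp
  have BF : B.comp F = AlgHom.id k _ := by
    apply HP_ext
    · intro x
      change B (F (f x)) = f x
      rw [Fg, Bg]
    · intro x
      change B (F (φ x)) = φ x
      rw [Fv, map_add, Bv, Bg]; simp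
  refine ⟨AlgEquiv.ofAlgHom F B FB BF, fun d => le_antisymm ?_ ?_⟩
  · exact map_filtP_le (-γ) F Fg Fv d
  · intro x hx
    exact ⟨B x, map_filtP_le γ B Bg Bv d ⟨x, hx, rfl⟩, AlgHom.congr_fun FB x⟩

end helpers

end DeformKoszul

open DeformKoszul

/-- **Theorem 6.1** of Shepler–Witherspoon, "Deforming group actions on Koszul
algebras": if the characteristic of `k` is coprime to `|G|` and `H_{λ,κ}` is a PBW
deformation of `S(V) ⋊ G`, then there is a parameter `κ' = κ'^C + κ'^L` such that
`H_{λ,κ} ≅ H_{0,κ'}` as filtered algebras; consequently `H_{0,κ'}` also has the PBW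
property. -/
theorem untwist_group_action_nonmodular
    (k G V : Type) [Field k] [Group G] [Fintype G] [AddCommGroup V] [Module k V]
    [FiniteDimensional k V] (h2 : (2 : k) ≠ 0) (hcard : (Fintype.card G : k) ≠ 0)
    (ρ : Representation k G V)
    (lam : G → V →ₗ[k] MonoidAlgebra k G)
    (κC : V →ₗ[k] V →ₗ[k] MonoidAlgebra k G)
    (κL : V →ₗ[k] V →ₗ[k] (V ⊗[k] MonoidAlgebra k G))
    (hC : ∀ v, κC v v = 0) (hL : ∀ v, κL v v = 0)
    (hPBW : IsPBWP k G V ρ lam κC κL) :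
    ∃ (κC' : V →ₗ[k] V →ₗ[k] MonoidAlgebra k G)
      (κL' : V →ₗ[k] V →ₗ[k] (V ⊗[k] MonoidAlgebra k G)),
      (∃ e : HP k G V ρ lam κC κL ≃ₐ[k] HP k G V ρ 0 κC' κL',
        ∀ d, Submodule.map (e.toLinearEquiv : _ →ₗ[k] _) (filtP k G V ρ lam κC κL d)
          = filtP k G V ρ 0 κC' κL' d) ∧
      IsPBWP k G V ρ 0 κC' κL' := by
  have hinj := iG_inj hPBW
  obtain ⟨e, he⟩ := main_equiv (κC := κC) (κL := κL) (gam ρ lam)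
    (fun g v => gam_spec hcard hinj g v)
  refine ⟨_, _, ⟨e, he⟩, fun d => ?_⟩
  rw [← hPBW d, ← he d]
  exact LinearEquiv.finrank_map_eq e.toLinearEquiv _
end
end
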